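/- Assume (H2), (H4) and (H5). Then the linear operator T : X_∞ → Y_∞ defined by Tu := u_t − Au is bijective. -/

import Mathlib

open Real Filter Set Function MeasureTheory
open scoped ENNReal

noncomputable section

namespace HopfStmt

/-- The sup part of the periodic Hölder norm. -/
def supN {E : Type*} [NormedAddCommGroup E] (u : ℝ → E) : ℝ := ⨆ t : ℝ, ‖u t‖

/-- The Hölder seminorm part. -/
def holS {E : Type*} [NormedAddCommGroup E] (β : ℝ) (u : ℝ → E) : ℝ :=
  ⨆ p : ℝ × ℝ, ‖u p.1 - u p.2‖ / |p.1 - p.2| ^ β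

/-- The norm of `C^β_{2π}(ℝ, E)`. -/
def holderN {E : Type*} [NormedAddCommGroup E] (β : ℝ) (u : ℝ → E) : ℝ :=
  supN u + holS β u

/-- Membership in `C^β_{2π}(ℝ, E)`: `2π`-periodic and `β`-Hölder continuous. -/
def MemHolder {E : Type*} [NormedAddCommGroup E] (β : ℝ) (u : ℝ → E) : Prop :=
  Function.Periodic u (2 * π) ∧ ∃ C : ℝ, ∀ s t : ℝ, ‖u s - u t‖ ≤ C * |s - t| ^ β

/-- Membership in the span of the first cosine and sine modes: `w = a ⊗ c₁ + b ⊗ s₁`. -/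
def memSp1 {E : Type*} [AddCommGroup E] [Module ℝ E] (w : ℝ → E) : Prop :=
  ∃ a b : E, ∀ t : ℝ, w t = Real.cos t • a + Real.sin t • b

/-- `L₁ ψ := Re (ψ ⊗ e₁)`, i.e. `(L₁ψ)(t) = cos t • ψ₁ - sin t • ψ₂` for `ψ = ψ₁ + iψ₂`. -/
def L1 {E : Type*} [AddCommGroup E] [Module ℝ E] (ψ : E × E) : ℝ → E :=
  fun t => Real.cos t • ψ.1 - Real.sin t • ψ.2

/-- Multiplication by the complex scalar `c` on the complexification `E_c = E × E`. -/
def csmul {E : Type*} [AddCommGroup E] [Module ℝ E] (c : ℂ) (x : E × E) : E × E :=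
  (c.re • x.1 - c.im • x.2, c.im • x.1 + c.re • x.2)

/-- Complex conjugation on the complexification. -/
def conjC {E : Type*} [AddCommGroup E] (x : E × E) : E × E := (x.1, -x.2)

variable {V : Type*} [NormedAddCommGroup V] [NormedSpace ℝ V]
variable {U : Type*} [NormedAddCommGroup U] [NormedSpace ℝ U]

/-- The complexified inclusion `ι_c : U_c → V_c`. -/
def iotaC (ι : U →L[ℝ] V) (ψ : U × U) : V × V := (ι ψ.1, ι ψ.2)

/-- The complexified operator `A_c : U_c → V_c`. -/
def AcC (A : U →L[ℝ] V) (ψ : U × U) : V × V := (A ψ.1, A ψ.2)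

/-- The operator `c - A_c : U_c → V_c` for a complex scalar `c`. -/
def cMinusA (ι A : U →L[ℝ] V) (c : ℂ) (ψ : U × U) : V × V :=
  csmul c (iotaC ι ψ) - AcC A ψ

/-- The kernel `𝒩(i - A_c) ⊆ U_c`. -/
def kerIA (ι A : U →L[ℝ] V) : Set (U × U) := {ψ | cMinusA ι A Complex.I ψ = 0}

/-- The range `ℛ(i - A_c) ⊆ V_c`. -/
def ranIA (ι A : U →L[ℝ] V) : Set (V × V) := Set.range (cMinusA ι A Complex.I)

/-- `V♯ := ℛ(i - A_c) ∩ ℛ(-i - A_c)`. -/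
def Vsharp (ι A : U →L[ℝ] V) : Set (V × V) :=
  Set.range (cMinusA ι A Complex.I) ∩ Set.range (cMinusA ι A (-Complex.I))

/-- The `V`-valued time derivative of `w : ℝ → U` (through the inclusion `ι`). -/
def Xder (ι : U →L[ℝ] V) (w : ℝ → U) : ℝ → V := fun t => deriv (fun s => ι (w s)) t

/-- Membership in `X := C^{1+β}_{2π}(ℝ,V) ∩ C^β_{2π}(ℝ,U)`. -/
def MemX (β : ℝ) (ι : U →L[ℝ] V) (w : ℝ → U) : Prop :=
  MemHolder β w ∧ (∀ t : ℝ, DifferentiableAt ℝ (fun s => ι (w s)) t) ∧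
    MemHolder β (Xder ι w)

/-- The norm of `X`: `‖w‖_X = ‖w‖_{V,1+β} + ‖w‖_{U,β}`. -/
def normX (β : ℝ) (ι : U →L[ℝ] V) (w : ℝ → U) : ℝ :=
  (holderN β (fun t => ι (w t)) + holderN β (Xder ι w)) + holderN β w

/-- `T₁ w := ẇ - A w`. -/
def T1op (ι A : U →L[ℝ] V) (w : ℝ → U) : ℝ → V := fun t => Xder ι w t - A (w t)

/-- Hypothesis (H2): `±i` are simple eigenvalues of `A`, i.e.
`dim 𝒩(i - A_c) = 1 = codim ℛ(i - A_c)` and nonzero kernel elements do not lie in the range. -/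
def H2hyp (ι A : U →L[ℝ] V) : Prop :=
  (∃ ψ ∈ kerIA ι A, ψ ≠ 0 ∧ ∀ φ ∈ kerIA ι A, ∃ c : ℂ, φ = csmul c ψ) ∧
  (∃ χ : V × V, χ ∉ ranIA ι A ∧ ∀ v : V × V, ∃ c : ℂ, ∃ r ∈ ranIA ι A, v = r + csmul c χ) ∧
  (∀ ψ ∈ kerIA ι A, ψ ≠ 0 → iotaC ι ψ ∉ ranIA ι A)

/-- Hypothesis (H4): `ik ∈ ρ(A_c)` for `k ∈ ℤ \ {-1, 1}`. -/
def H4hyp (ι A : U →L[ℝ] V) : Prop :=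
  ∀ k : ℤ, k ≠ 1 → k ≠ -1 → Function.Bijective (cMinusA ι A (Complex.I * (k : ℂ)))

/-- Hypothesis (H5): `‖(in - A_c)⁻¹‖ ≤ M / n` for `n = 2, 3, 4, ...`. -/
def H5hyp (ι A : U →L[ℝ] V) : Prop :=
  ∃ M : ℝ, 0 < M ∧ ∀ n : ℕ, 2 ≤ n →
    ∀ ψ : U × U, (n : ℝ) * ‖iotaC ι ψ‖ ≤ M * ‖cMinusA ι A (Complex.I * (n : ℂ)) ψ‖

/-- Hypothesis (H3): the eigenvalue branch `μ(λ)` of `A_c + (h_u(λ,0))_c` through `μ(0) = i`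
satisfies the transversality condition `Re μ'(0) ≠ 0`. -/
def H3hyp (ι A : U →L[ℝ] V) (h : ℝ → U → V) : Prop :=
  ∃ (ε : ℝ) (μ : ℝ → ℂ) (ψb : ℝ → U × U) (μ' : ℂ), 0 < ε ∧
    μ 0 = Complex.I ∧ ψb 0 ∈ kerIA ι A ∧ ψb 0 ≠ 0 ∧
    ContinuousOn ψb (Metric.ball (0 : ℝ) ε) ∧
    (∀ lam ∈ Metric.ball (0 : ℝ) ε,
      AcC A (ψb lam) + (fderiv ℝ (h lam) 0 (ψb lam).1, fderiv ℝ (h lam) 0 (ψb lam).2)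
        = csmul (μ lam) (iotaC ι (ψb lam))) ∧
    HasDerivAt μ μ' 0 ∧ μ'.re ≠ 0

/-- Unbundled notion: `f : (E, NE) → (F, NF)` is of class `C²` on `D` (Fréchet sense). -/
def UFC2On {E F : Type*} [AddCommGroup E] [Module ℝ E] [AddCommGroup F] [Module ℝ F]
    (NE : E → ℝ) (NF : F → ℝ) (D : Set E) (f : E → F) : Prop :=
  ∃ (D1 : E → E → F) (D2 : E → E → E → F),
    (∀ x ∈ D, IsLinearMap ℝ (D1 x) ∧ ∃ C : ℝ, ∀ e, NF (D1 x e) ≤ C * NE e) ∧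
    (∀ x ∈ D, ∀ ε > (0 : ℝ), ∃ d > (0 : ℝ), ∀ y ∈ D, NE (y - x) < d →
      NF (f y - f x - D1 x (y - x)) ≤ ε * NE (y - x)) ∧
    (∀ x ∈ D, (∀ e, IsLinearMap ℝ (D2 x e)) ∧ (∀ e', IsLinearMap ℝ (fun e => D2 x e e')) ∧
      ∃ C : ℝ, ∀ e e', NF (D2 x e e') ≤ C * NE e * NE e') ∧
    (∀ x ∈ D, ∀ ε > (0 : ℝ), ∃ d > (0 : ℝ), ∀ y ∈ D, NE (y - x) < d →
      ∀ e, NF (D1 y e - D1 x e - D2 x (y - x) e) ≤ ε * NE (y - x) * NE e) ∧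
    (∀ x ∈ D, ∀ ε > (0 : ℝ), ∃ d > (0 : ℝ), ∀ y ∈ D, NE (y - x) < d →
      ∀ e e', NF (D2 y e e' - D2 x e e') ≤ ε * NE e * NE e')

/-- Unbundled notion: `f : ℝ → (E, NE)` is `C¹` on `s` with derivative `f'`. -/
def UC1On {E : Type*} [AddCommGroup E] [Module ℝ E] (NE : E → ℝ) (s : Set ℝ)
    (f f' : ℝ → E) : Prop :=
  (∀ a ∈ s, ∀ ε > (0 : ℝ), ∃ d > (0 : ℝ), ∀ b ∈ s, |b - a| < d →
    NE (f b - f a - (b - a) • f' a) ≤ ε * |b - a|) ∧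
  (∀ a ∈ s, ∀ ε > (0 : ℝ), ∃ d > (0 : ℝ), ∀ b ∈ s, |b - a| < d → NE (f' b - f' a) ≤ ε)


/-- The `n`-th Fourier coefficient `φ̂(n) = (1/2π) ∫₀^{2π} φ(t) e^{-int} dt ∈ V_c`
of a periodic `V`-valued function. -/
def fourierC {V : Type*} [NormedAddCommGroup V] [NormedSpace ℝ V] [CompleteSpace V]
    (u : ℝ → V) (n : ℤ) : V × V :=
  ((2 * π)⁻¹ • ∫ t in (0:ℝ)..(2 * π), Real.cos ((n : ℝ) * t) • u t,
    -((2 * π)⁻¹ • ∫ t in (0:ℝ)..(2 * π), Real.sin ((n : ℝ) * t) • u t))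

/- In Fourier coefficients the equation `Tu = y` reads `(in - A_c) û(n) = ŷ(n)`, so (H4) determines
`û(n)` for `|n| ≥ 2` and `T` is injective. For surjectivity one needs the sequence of resolvents
`(in - A_c)⁻¹` to be a Fourier multiplier from `C^β_{2π}(ℝ, V)` to `C^β_{2π}(ℝ, U)`. With
`S n := (in - A_c)⁻¹`, the resolvent identity gives `ΔS n = -i S (n + 1) S n` and
`Δ²S n = -2 S (n + 1) S (n + 2) S n`, so the decay (H5) yields `ΔS n = O(1/n)` and `Δ²S n = O(1/n²)`
in `ℒ(V_c, U_c)`. Split the multiplier into dyadic blocks. Two summations by parts bound the kernel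
of the block at frequency `N` by `N / (1 + N |t|) ^ 2` (up to a constant), and this kernel has mean
zero, so the block of `y` is `O(N^(-β))` with Lipschitz constant `O(N^(1-β))`. Summing over
`N = 2^j` gives a `β`-Hölder function. -/

section Hoelder

variable {E F : Type*} [NormedAddCommGroup E] [NormedAddCommGroup F] {β : ℝ} {u v : ℝ → E}

lemma MemHolder.continuous (hu : MemHolder β u) (hβ : 0 < β) : Continuous u := by
  obtain ⟨-, C, hC⟩ := hu
  refine continuous_iff_continuousAt.2 fun t => tendsto_iff_norm_sub_tendsto_zero.2 ?_
  have hcont : Continuous fun s : ℝ => C * |s - t| ^ β :=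
    continuous_const.mul ((continuous_abs.comp (continuous_sub_right t)).rpow_const
      fun _ => Or.inr hβ.le)
  refine squeeze_zero (fun _ => norm_nonneg _) (fun s => hC s t) ?_
  simpa [Real.zero_rpow hβ.ne'] using hcont.tendsto t

lemma MemHolder.add (hu : MemHolder β u) (hv : MemHolder β v) :
    MemHolder β fun t => u t + v t := by
  obtain ⟨hup, C, hC⟩ := hu
  obtain ⟨hvp, D, hD⟩ := hv
  refine ⟨hup.add hvp, C + D, fun s t => ?_⟩
  rw [add_sub_add_comm, add_mul]
  exact (norm_add_le _ _).trans (add_le_add (hC s t) (hD s t))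

lemma MemHolder.map [NormedSpace ℝ E] [NormedSpace ℝ F] (hu : MemHolder β u) (T : E →L[ℝ] F) :
    MemHolder β fun t => T (u t) := by
  obtain ⟨hup, C, hC⟩ := hu
  refine ⟨hup.comp T, ‖T‖ * C, fun s t => ?_⟩
  rw [← map_sub, mul_assoc]
  exact T.le_opNorm_of_le (hC s t)

lemma MemHolder.sub [NormedSpace ℝ E] (hu : MemHolder β u) (hv : MemHolder β v) :
    MemHolder β fun t => u t - v t := by
  simpa [sub_eq_add_neg] using hu.add (hv.map (-ContinuousLinearMap.id ℝ E))

lemma sum_two_pow_rpow_le {γ x : ℝ} (hγ : 0 < γ) (hx : 0 < x) {J : ℕ}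
    (hJ : ∀ k < J, (2 : ℝ) ^ k ≤ x) :
    ∑ j ∈ Finset.range J, ((2 : ℝ) ^ j) ^ γ ≤ 2 ^ γ / (2 ^ γ - 1) * x ^ γ := by
  have hq : (1 : ℝ) < 2 ^ γ := Real.one_lt_rpow one_lt_two hγ
  have : (0 : ℝ) < 2 ^ γ - 1 := sub_pos.2 hq
  simp only [← Real.rpow_pow_comm zero_le_two γ]
  rw [geom_sum_eq hq.ne', div_mul_eq_mul_div]
  gcongr
  rcases J with _ | k
  · simp only [pow_zero, sub_self]
    positivity
  · have hk : ((2 : ℝ) ^ γ) ^ k ≤ x ^ γ := by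
      rw [Real.rpow_pow_comm zero_le_two]
      exact Real.rpow_le_rpow (by positivity) (hJ k k.lt_succ_self) hγ.le
    calc ((2 : ℝ) ^ γ) ^ (k + 1) - 1 ≤ 2 ^ γ * (2 ^ γ) ^ k := by rw [pow_succ']; linarith
      _ ≤ 2 ^ γ * x ^ γ := by gcongr

lemma summable_two_pow_rpow_neg (hβ : 0 < β) : Summable fun j : ℕ => ((2 : ℝ) ^ j) ^ (-β) := by
  simp only [← Real.rpow_pow_comm zero_le_two]
  exact summable_geometric_of_lt_one (by positivity)
    (Real.rpow_lt_one_of_one_lt_of_neg one_lt_two (neg_neg_of_pos hβ))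

lemma two_pow_add_rpow_neg_le (hβ : 0 < β) {x : ℝ} (hx : 0 < x) {J : ℕ} (hJ : x ≤ 2 ^ J) (j : ℕ) :
    ((2 : ℝ) ^ (j + J)) ^ (-β) ≤ x ^ (-β) * ((2 : ℝ) ^ j) ^ (-β) := by
  rw [← Real.mul_rpow hx.le (by positivity), mul_comm x, pow_add]
  exact Real.rpow_le_rpow_of_nonpos (by positivity) (by gcongr) (neg_nonpos.2 hβ.le)

lemma exists_two_pow_near (x : ℝ) : ∃ J : ℕ, x ≤ 2 ^ J ∧ ∀ k < J, (2 : ℝ) ^ k ≤ x := by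
  classical
  have hex : ∃ J : ℕ, x ≤ 2 ^ J := (pow_unbounded_of_one_lt x one_lt_two).imp fun _ => le_of_lt
  exact ⟨Nat.find hex, Nat.find_spec hex, fun k hk => (not_le.1 (Nat.find_min hex hk)).le⟩

/- At a distance `h`, the blocks of frequency `2 ^ j < h⁻¹` are estimated by their Lipschitz
constants and the others by their sizes. -/
lemma exists_norm_tsum_le_rpow [CompleteSpace F] (hβ : β ∈ Ioo (0 : ℝ) 1) (a : ℝ) :
    ∃ C : ℝ, ∀ (D : ℕ → F) (h : ℝ), 0 < h → (∀ j, ‖D j‖ ≤ a * ((2 : ℝ) ^ j) ^ (-β)) →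
      (∀ j, ‖D j‖ ≤ a * ((2 : ℝ) ^ j) ^ (1 - β) * h) → ‖∑' j, D j‖ ≤ C * h ^ β := by
  set q : ℝ := 2 ^ (1 - β) / (2 ^ (1 - β) - 1)
  set r : ℝ := ∑' j : ℕ, ((2 : ℝ) ^ j) ^ (-β)
  refine ⟨a * q + a * r, fun D h hh hsize hlip => ?_⟩
  have ha : 0 ≤ a := by simpa using (norm_nonneg _).trans (hsize 0)
  have hgeom := summable_two_pow_rpow_neg hβ.1
  obtain ⟨J, hJ, hJ'⟩ := exists_two_pow_near h⁻¹
  have hlow : ‖∑ j ∈ Finset.range J, D j‖ ≤ a * q * h ^ β := by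
    calc ‖∑ j ∈ Finset.range J, D j‖
        ≤ ∑ j ∈ Finset.range J, a * ((2 : ℝ) ^ j) ^ (1 - β) * h :=
          norm_sum_le_of_le _ fun j _ => hlip j
      _ = a * (∑ j ∈ Finset.range J, ((2 : ℝ) ^ j) ^ (1 - β)) * h := by
          rw [← Finset.sum_mul, ← Finset.mul_sum]
      _ ≤ a * (q * h⁻¹ ^ (1 - β)) * h := by
          gcongr
          exact sum_two_pow_rpow_le (sub_pos.2 hβ.2) (inv_pos.2 hh) hJ'
      _ = a * q * (h ^ (β - 1) * h) := by
          rw [Real.inv_rpow hh.le, ← Real.rpow_neg hh.le, neg_sub]; ring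
      _ = a * q * h ^ β := by rw [← Real.rpow_add_one hh.ne', sub_add_cancel]
  have hhigh : ‖∑' j, D (j + J)‖ ≤ a * r * h ^ β := by
    refine tsum_of_norm_bounded ((hgeom.hasSum.mul_left a).mul_right (h ^ β)) fun j => ?_
    calc ‖D (j + J)‖ ≤ a * ((2 : ℝ) ^ (j + J)) ^ (-β) := hsize _
      _ ≤ a * (h⁻¹ ^ (-β) * ((2 : ℝ) ^ j) ^ (-β)) := by
          gcongr
          exact two_pow_add_rpow_neg_le hβ.1 (inv_pos.2 hh) hJ j
      _ = a * ((2 : ℝ) ^ j) ^ (-β) * h ^ β := by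
          rw [Real.rpow_neg (inv_nonneg.2 hh.le), Real.inv_rpow hh.le, inv_inv]; ring
  rw [← (Summable.of_norm_bounded (hgeom.mul_left a) hsize).sum_add_tsum_nat_add J, add_mul]
  exact (norm_add_le _ _).trans (add_le_add hlow hhigh)

lemma memHolder_tsum [CompleteSpace F] (hβ : β ∈ Ioo (0 : ℝ) 1) {a : ℝ} {G : ℕ → ℝ → F}
    (hper : ∀ j, Function.Periodic (G j) (2 * π))
    (hsize : ∀ j t, ‖G j t‖ ≤ a * ((2 : ℝ) ^ j) ^ (-β))
    (hlip : ∀ j t s, ‖G j t - G j s‖ ≤ a * ((2 : ℝ) ^ j) ^ (1 - β) * |t - s|) :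
    MemHolder β fun t => ∑' j, G j t := by
  have ha : 0 ≤ a := by simpa using (norm_nonneg _).trans (hsize 0 0)
  obtain ⟨C, hC⟩ := exists_norm_tsum_le_rpow (F := F) hβ (2 * a)
  have hsum (t : ℝ) : Summable fun j => G j t :=
    Summable.of_norm_bounded ((summable_two_pow_rpow_neg hβ.1).mul_left a) fun j => hsize j t
  refine ⟨fun t => by simp only [hper _ t], C, fun t s => ?_⟩
  rcases eq_or_ne t s with rfl | hts
  · simp [Real.zero_rpow hβ.1.ne']
  rw [← (hsum t).tsum_sub (hsum s)]
  refine hC _ _ (abs_pos.2 (sub_ne_zero.2 hts)) (fun j => ?_) fun j => (hlip j t s).trans ?_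
  · calc ‖G j t - G j s‖ ≤ ‖G j t‖ + ‖G j s‖ := norm_sub_le _ _
      _ ≤ 2 * a * ((2 : ℝ) ^ j) ^ (-β) := by linarith [hsize j t, hsize j s]
  · gcongr
    linarith

end Hoelder

section FiniteDifferences

open Asymptotics
open scoped fwdDiff NNReal

variable {E F : Type*} [NormedAddCommGroup E] [NormedAddCommGroup F]

/-- `‖S n‖ = O(1)`, `‖ΔS n‖ = O(1/n)` and `‖Δ²S n‖ = O(1/n²)`: the discrete form of the
Marcinkiewicz (Mikhlin) condition of order two on the symbol of a Fourier multiplier. The weight is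
`1 / (n + 1)` because `1 / n` vanishes at `n = 0`. -/
structure IsMarcinkiewicz (S : ℕ → F) : Prop where
  isBigO : S =O[atTop] fun _ => (1 : ℝ)
  isBigO_fwdDiff : Δ_[1] S =O[atTop] fun n => ((n : ℝ) + 1)⁻¹
  isBigO_fwdDiff_fwdDiff : Δ_[1] (Δ_[1] S) =O[atTop] fun n => (((n : ℝ) + 1) ^ 2)⁻¹

/-- A sequence supported in the dyadic annulus `N < n < 4N` which varies at scale `N` up to order
two, with constant `C`. -/
structure IsDyadicBlock (N : ℕ) (C : ℝ) (c : ℕ → F) : Prop where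
  eq_zero_of_le : ∀ n ≤ N, c n = 0
  eq_zero_of_ge : ∀ n, 4 * N ≤ n → c n = 0
  norm_le : ∀ n, ‖c n‖ ≤ C
  norm_fwdDiff_le : ∀ n, ‖Δ_[1] c n‖ ≤ C / N
  norm_fwdDiff_fwdDiff_le : ∀ n, ‖Δ_[1] (Δ_[1] c) n‖ ≤ C / N ^ 2

lemma IsMarcinkiewicz.exists_bound {S : ℕ → F} (hS : IsMarcinkiewicz S) :
    ∃ D : ℝ, ∀ N n : ℕ, 1 ≤ N → N ≤ n + 1 →
      ‖S n‖ ≤ D ∧ ‖Δ_[1] S n‖ ≤ D / N ∧ ‖Δ_[1] (Δ_[1] S) n‖ ≤ D / N ^ 2 := by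
  have hne (n : ℕ) : (n : ℝ) + 1 ≠ 0 := n.cast_add_one_ne_zero
  obtain ⟨C₀, h₀⟩ := isBigO_one_nat_atTop_iff.1 hS.isBigO
  obtain ⟨C₁, h₁⟩ := (isBigO_nat_atTop_iff fun n h => absurd h (inv_ne_zero (hne n))).1
    hS.isBigO_fwdDiff
  obtain ⟨C₂, h₂⟩ := (isBigO_nat_atTop_iff fun n h => absurd h
    (inv_ne_zero (pow_ne_zero 2 (hne n)))).1 hS.isBigO_fwdDiff_fwdDiff
  refine ⟨max C₀ (max C₁ C₂), fun N n hN hn => ?_⟩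
  have : (0 : ℝ) < N := by exact_mod_cast hN
  have hn' : (N : ℝ) ≤ n + 1 := by exact_mod_cast hn
  have hmax : 0 ≤ max C₀ (max C₁ C₂) := ((norm_nonneg _).trans (h₀ 0)).trans (le_max_left _ _)
  refine ⟨(h₀ n).trans (le_max_left _ _), (h₁ n).trans ?_, (h₂ n).trans ?_⟩
  · rw [norm_inv, Real.norm_of_nonneg (by positivity), ← div_eq_mul_inv]
    calc C₁ / ((n : ℝ) + 1) ≤ max C₀ (max C₁ C₂) / (n + 1) := by gcongr; simp
      _ ≤ max C₀ (max C₁ C₂) / N := by gcongr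
  · rw [norm_inv, Real.norm_of_nonneg (by positivity), ← div_eq_mul_inv]
    calc C₂ / ((n : ℝ) + 1) ^ 2 ≤ max C₀ (max C₁ C₂) / ((n : ℝ) + 1) ^ 2 := by gcongr; simp
      _ ≤ max C₀ (max C₁ C₂) / N ^ 2 := by gcongr

variable [NormedSpace ℝ E] [NormedSpace ℝ F]

lemma IsMarcinkiewicz.map {S : ℕ → E} (hS : IsMarcinkiewicz S) (T : E →L[ℝ] F) :
    IsMarcinkiewicz fun n => T (S n) := by
  have h₁ : Δ_[1] (fun n => T (S n)) = fun n => T (Δ_[1] S n) := by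
    ext n; simp only [fwdDiff, map_sub]
  have h₂ : Δ_[1] (fun n => T (Δ_[1] S n)) = fun n => T (Δ_[1] (Δ_[1] S) n) := by
    ext n; simp only [fwdDiff, map_sub]
  refine ⟨(T.isBigO_comp _ _).trans hS.isBigO, ?_, ?_⟩
  · rw [h₁]
    exact (T.isBigO_comp _ _).trans hS.isBigO_fwdDiff
  · rw [h₁, h₂]
    exact (T.isBigO_comp _ _).trans hS.isBigO_fwdDiff_fwdDiff

lemma fwdDiff_smul_apply (f : ℕ → ℝ) (S : ℕ → F) (n : ℕ) :
    Δ_[1] (f • S) n = f (n + 1) • Δ_[1] S n + Δ_[1] f n • S n := by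
  simp only [fwdDiff, Pi.smul_apply']
  module

lemma fwdDiff_fwdDiff_smul_apply (f : ℕ → ℝ) (S : ℕ → F) (n : ℕ) :
    Δ_[1] (Δ_[1] (f • S)) n = f (n + 2) • Δ_[1] (Δ_[1] S) n +
      (2 : ℝ) • Δ_[1] f (n + 1) • Δ_[1] S n + Δ_[1] (Δ_[1] f) n • S n := by
  simp only [fwdDiff, Pi.smul_apply']
  module

lemma IsDyadicBlock.smul {N : ℕ} (hN : 1 ≤ N) {C D : ℝ} {ψ : ℕ → ℝ} {S : ℕ → F}
    (hψ : IsDyadicBlock N C ψ) (hS : ∀ n : ℕ, N ≤ n + 1 →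
      ‖S n‖ ≤ D ∧ ‖Δ_[1] S n‖ ≤ D / N ∧ ‖Δ_[1] (Δ_[1] S) n‖ ≤ D / N ^ 2) :
    IsDyadicBlock N (4 * (C * D)) (ψ • S) := by
  have hC : 0 ≤ C := (norm_nonneg _).trans (hψ.norm_le 0)
  have hD : 0 ≤ D := (norm_nonneg _).trans (hS N N.le_succ).1
  have hsmul {x y a b : ℝ} {z : F} (hx : ‖x‖ ≤ a) (hz : ‖z‖ ≤ b) (hy : a * b ≤ y) :
      ‖x • z‖ ≤ y := (norm_smul_le x z).trans <|
      (mul_le_mul hx hz (norm_nonneg _) ((norm_nonneg _).trans hx)).trans hy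
  have hzero (n : ℕ) (hn : n ≤ N) : (ψ • S) n = 0 := by simp [hψ.eq_zero_of_le n hn]
  refine ⟨hzero, fun n hn => by simp [hψ.eq_zero_of_ge n hn], fun n => ?_, fun n => ?_,
    fun n => ?_⟩ <;> rcases lt_or_ge (n + 1) N with hn | hn
  · rw [hzero n (by lia), norm_zero]
    positivity
  · exact hsmul (hψ.norm_le n) (hS n hn).1 (by nlinarith [mul_nonneg hC hD])
  · rw [fwdDiff, hzero n (by lia), hzero (n + 1) hn.le, sub_self, norm_zero]
    positivity
  · rw [fwdDiff_smul_apply]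
    have h₁ := hsmul (hψ.norm_le (n + 1)) (hS n hn).2.1 (le_of_eq (mul_div_assoc C D N).symm)
    have h₂ := hsmul (hψ.norm_fwdDiff_le n) (hS n hn).1 (le_of_eq (div_mul_eq_mul_div C N D))
    calc _ ≤ C * D / N + C * D / N := norm_add_le_of_le h₁ h₂
      _ ≤ 4 * (C * D) / N := by rw [← add_div]; gcongr; linarith [mul_nonneg hC hD]
  · rw [fwdDiff, fwdDiff, fwdDiff, hzero n (by lia), hzero (n + 1) hn.le, hzero (n + 1 + 1) hn]
    simp only [sub_self, norm_zero]
    positivity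
  · rw [fwdDiff_fwdDiff_smul_apply]
    have h₁ : ‖ψ (n + 2) • Δ_[1] (Δ_[1] S) n‖ ≤ C * D / N ^ 2 :=
      hsmul (hψ.norm_le _) (hS n hn).2.2 (by rw [mul_div_assoc])
    have h₂ : ‖(2 : ℝ) • Δ_[1] ψ (n + 1) • Δ_[1] S n‖ ≤ 2 * (C * D / N ^ 2) := by
      rw [norm_smul, Real.norm_two]
      gcongr
      exact hsmul (hψ.norm_fwdDiff_le _) (hS n hn).2.1 (by rw [div_mul_div_comm, sq])
    have h₃ : ‖Δ_[1] (Δ_[1] ψ) n • S n‖ ≤ C * D / N ^ 2 :=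
      hsmul (hψ.norm_fwdDiff_fwdDiff_le n) (hS n hn).1 (by rw [div_mul_eq_mul_div])
    exact (norm_add_le_of_le (norm_add_le_of_le h₁ h₂) h₃).trans (le_of_eq (by ring))

lemma norm_fwdDiff_fwdDiff_le {f : ℝ → F} (hf : Differentiable ℝ f) {K : ℝ≥0}
    (hK : LipschitzWith K (deriv f)) (h x : ℝ) : ‖Δ_[h] (Δ_[h] f) x‖ ≤ K * h ^ 2 := by
  have hderiv (y : ℝ) : HasDerivAt (Δ_[h] f) (deriv f (y + h) - deriv f y) y :=
    ((hf _).hasDerivAt.comp_add_const y h).sub (hf y).hasDerivAt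
  have hbound (y : ℝ) : ‖deriv f (y + h) - deriv f y‖ ≤ K * |h| := by
    simpa [dist_eq_norm] using hK.dist_le_mul (y + h) y
  have := convex_univ.norm_image_sub_le_of_norm_hasDerivWithin_le
    (fun y _ => (hderiv y).hasDerivWithinAt) (fun y _ => hbound y) (mem_univ x) (mem_univ (x + h))
  rwa [add_sub_cancel_left, Real.norm_eq_abs, mul_assoc, ← sq, sq_abs] at this

lemma exists_isDyadicBlock {g : ℝ → ℝ} (hg : ContDiff ℝ 2 g) (hsupp : support g ⊆ Ioo 1 4) :
    ∃ K : ℝ, ∀ N : ℕ, 1 ≤ N → IsDyadicBlock N K fun n => g (n / N) := by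
  have hzero {x : ℝ} (hx : x ∉ Ioo (1 : ℝ) 4) : g x = 0 := by
    by_contra h
    exact hx (hsupp h)
  have hcomp : HasCompactSupport g :=
    .of_support_subset_isCompact isCompact_Icc (hsupp.trans Ioo_subset_Icc_self)
  have hg' : ContDiff ℝ 1 (deriv g) := (contDiff_succ_iff_deriv.1 hg).2.2
  obtain ⟨K₀, h₀⟩ := hcomp.exists_bound_of_continuous hg.continuous
  obtain ⟨K₁, h₁⟩ := hg.lipschitzWith_of_hasCompactSupport hcomp two_ne_zero
  obtain ⟨K₂, h₂⟩ := hg'.lipschitzWith_of_hasCompactSupport hcomp.deriv one_ne_zero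
  have hstep (N n : ℕ) : ((n + 1 : ℕ) : ℝ) / N = n / N + 1 / N := by push_cast; ring
  refine ⟨max K₀ (max K₁ K₂), fun N hN => ?_⟩
  have hN' : (0 : ℝ) < N := by exact_mod_cast hN
  have hdiff : Δ_[1] (fun n : ℕ => g (n / N)) = fun n : ℕ => Δ_[1 / (N : ℝ)] g (n / N) := by
    ext n; simp only [fwdDiff, hstep]
  refine ⟨fun n hn => hzero fun h => ?_, fun n hn => hzero fun h => ?_,
    fun n => (h₀ _).trans (le_max_left _ _), fun n => ?_, fun n => ?_⟩
  · have : (n : ℝ) ≤ N := by exact_mod_cast hn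
    exact absurd h.1 (not_lt.2 ((div_le_one hN').2 this))
  · have : (4 : ℝ) * N ≤ n := by exact_mod_cast hn
    exact absurd h.2 (not_lt.2 ((le_div_iff₀ hN').2 this))
  · calc ‖Δ_[1] (fun n : ℕ => g (n / N)) n‖ ≤ K₁ * (1 / N) := by
          rw [hdiff]
          simpa [fwdDiff, dist_eq_norm] using h₁.dist_le_mul (n / N + 1 / N) (n / N)
      _ ≤ max K₀ (max K₁ K₂) / N := by rw [mul_one_div]; gcongr; simp
  · calc ‖Δ_[1] (Δ_[1] fun n : ℕ => g (n / N)) n‖ ≤ K₂ * (1 / N) ^ 2 := by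
          rw [hdiff, fwdDiff, hstep]
          exact norm_fwdDiff_fwdDiff_le (hg.differentiable two_ne_zero) h₂ _ _
      _ ≤ max K₀ (max K₁ K₂) / N ^ 2 := by rw [one_div, inv_pow, ← div_eq_mul_inv]; gcongr; simp

end FiniteDifferences

section DyadicBump

/-- The smooth bump `χ(x/2) - χ(x)`, where `χ` is a cutoff equal to `1` on `(-∞, 1]` and to `0` on
`[2, ∞)`. Its dyadic dilates form a Littlewood-Paley partition of unity. -/
def dyadicBump (x : ℝ) : ℝ := smoothTransition (2 - x / 2) - smoothTransition (2 - x)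

lemma contDiff_dyadicBump : ContDiff ℝ 2 dyadicBump :=
  (smoothTransition.contDiff.comp (contDiff_const.sub (contDiff_id.div_const 2))).sub
    (smoothTransition.contDiff.comp (contDiff_const.sub contDiff_id))

lemma support_dyadicBump_subset : support dyadicBump ⊆ Ioo 1 4 := by
  intro x hx
  by_contra h
  refine hx ?_
  rcases le_or_gt x 1 with hx₁ | hx₁
  · simp [dyadicBump, smoothTransition.one_of_one_le, show 1 ≤ 2 - x / 2 by linarith,
      show 1 ≤ 2 - x by linarith]
  · have hx₄ : 4 ≤ x := not_lt.1 fun h' => h ⟨hx₁, h'⟩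
    simp [dyadicBump, smoothTransition.zero_of_nonpos, show 2 - x / 2 ≤ 0 by linarith,
      show 2 - x ≤ 0 by linarith]

lemma hasSum_dyadicBump (n : ℕ) :
    HasSum (fun j : ℕ => dyadicBump (n / (2 ^ j : ℕ))) (if 2 ≤ n then 1 else 0) := by
  have hbump (j : ℕ) : dyadicBump (n / (2 ^ j : ℕ)) =
      smoothTransition (2 - n / 2 ^ (j + 1)) - smoothTransition (2 - n / 2 ^ j) := by
    rw [dyadicBump, div_div]
    push_cast
    rw [pow_succ]
  have hlarge (j : ℕ) (hj : n ≤ j) : smoothTransition (2 - n / 2 ^ j) = 1 := by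
    have : (n : ℝ) / 2 ^ j ≤ 1 := (div_le_one (by positivity)).2
      (by exact_mod_cast hj.trans Nat.lt_two_pow_self.le)
    exact smoothTransition.one_of_one_le (by linarith)
  have hsum : HasSum (fun j : ℕ => dyadicBump (n / (2 ^ j : ℕ)))
      (∑ j ∈ Finset.range n, dyadicBump (n / (2 ^ j : ℕ))) :=
    hasSum_sum_of_ne_finset_zero fun j hj => by
      have hj : n ≤ j := by simpa using hj
      rw [hbump, hlarge _ hj, hlarge _ (by lia), sub_self]
  simp only [hbump] at hsum ⊢
  rw [Finset.sum_range_sub fun j : ℕ => smoothTransition (2 - (n : ℝ) / 2 ^ j),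
    hlarge n le_rfl, pow_zero, div_one] at hsum
  convert! hsum using 1
  split_ifs with hn
  · have : (2 : ℝ) ≤ n := by exact_mod_cast hn
    rw [smoothTransition.zero_of_nonpos (by linarith), sub_zero]
  · have : (n : ℝ) ≤ 1 := by exact_mod_cast Nat.lt_succ_iff.1 (not_le.1 hn)
    rw [smoothTransition.one_of_one_le (by linarith), sub_self]

end DyadicBump

section Kernel

open scoped fwdDiff

variable {F : Type*} [NormedAddCommGroup F] [NormedSpace ℝ F]

lemma integrable_abs_rpow_div_one_add_sq {β : ℝ} (hβ : β ∈ Ioo (0 : ℝ) 1) :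
    Integrable fun x : ℝ => |x| ^ β / (1 + x ^ 2) := by
  have hdom : Integrable (fun x : ℝ => (1 + ‖x‖ ^ 2) ^ (-(2 - β) / 2)) volume :=
    integrable_rpow_neg_one_add_norm_sq (by simpa using by linarith [hβ.2])
  have hcont : Continuous fun x : ℝ => |x| ^ β / (1 + x ^ 2) :=
    (continuous_abs.rpow_const fun _ => Or.inr hβ.1.le).div (by fun_prop) fun x => by positivity
  refine hdom.mono' hcont.aestronglyMeasurable (Eventually.of_forall fun x => ?_)
  have hx : (0 : ℝ) < 1 + x ^ 2 := by positivity
  have habs : |x| ^ β ≤ (1 + x ^ 2) ^ (β / 2) := by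
    calc |x| ^ β = (x ^ 2) ^ (β / 2) := by
          rw [← sq_abs, ← Real.rpow_natCast_mul (abs_nonneg x)]
          congr 1
          push_cast
          ring
      _ ≤ (1 + x ^ 2) ^ (β / 2) :=
          Real.rpow_le_rpow (sq_nonneg x) (by linarith) (by linarith [hβ.1])
  rw [Real.norm_of_nonneg (by positivity), Real.norm_eq_abs, sq_abs,
    show -(2 - β) / 2 = β / 2 - 1 by ring, Real.rpow_sub_one hx.ne']
  gcongr

lemma exists_integral_weight_le {β : ℝ} (hβ : β ∈ Ioo (0 : ℝ) 1) : ∃ I : ℝ, ∀ N : ℝ, 0 < N →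
    ∫ s in (-π)..π, N / (1 + N ^ 2 * s ^ 2) * |s| ^ β ≤ I * N ^ (-β) := by
  refine ⟨∫ x : ℝ, |x| ^ β / (1 + x ^ 2), fun N hN => ?_⟩
  have hw := integrable_abs_rpow_div_one_add_sq hβ
  have hscale (s : ℝ) : N / (1 + N ^ 2 * s ^ 2) * |s| ^ β =
      N ^ (1 - β) * (|N * s| ^ β / (1 + (N * s) ^ 2)) := by
    rw [abs_mul, abs_of_pos hN, Real.mul_rpow hN.le (abs_nonneg s), Real.rpow_sub hN, Real.rpow_one]
    field_simp
  simp only [hscale]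
  calc ∫ s in (-π)..π, N ^ (1 - β) * (|N * s| ^ β / (1 + (N * s) ^ 2))
      ≤ ∫ s : ℝ, N ^ (1 - β) * (|N * s| ^ β / (1 + (N * s) ^ 2)) := by
        rw [intervalIntegral.integral_of_le (by linarith [pi_pos])]
        exact setIntegral_le_integral ((hw.comp_mul_left' hN.ne').const_mul _)
          (Eventually.of_forall fun s => by positivity)
    _ = (∫ x : ℝ, |x| ^ β / (1 + x ^ 2)) * N ^ (-β) := by
        rw [integral_const_mul,
          Measure.integral_comp_mul_left (fun x : ℝ => |x| ^ β / (1 + x ^ 2)) N,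
          abs_of_pos (inv_pos.2 hN), smul_eq_mul, sub_eq_add_neg, Real.rpow_add hN, Real.rpow_one]
        field_simp

lemma two_mul_cos_mul_cos_succ (n : ℕ) (s θ : ℝ) :
    2 * cos s * cos ((n + 1 : ℕ) * s + θ) =
      cos ((n + 1 + 1 : ℕ) * s + θ) + cos (n * s + θ) := by
  have h₁ : ((n + 1 + 1 : ℕ) : ℝ) * s + θ = (n + 1 : ℕ) * s + θ + s := by push_cast; ring
  have h₂ : (n : ℝ) * s + θ = (n + 1 : ℕ) * s + θ - s := by push_cast; ring
  rw [h₁, h₂, cos_add (_ + θ) s, cos_sub (_ + θ) s]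
  ring

/- Summation by parts, twice. -/
lemma sum_cos_smul_fwdDiff_fwdDiff (c : ℕ → F) (s θ : ℝ) (m : ℕ) :
    ∑ n ∈ Finset.range m, cos ((n + 1 : ℕ) * s + θ) • Δ_[1] (Δ_[1] c) n +
        (2 - 2 * cos s) • ∑ n ∈ Finset.range m, cos ((n + 1 : ℕ) * s + θ) • c (n + 1) =
      (cos (m * s + θ) • c (m + 1) - cos ((m + 1 : ℕ) * s + θ) • c m) -
        (cos θ • c 1 - cos (s + θ) • c 0) := by
  induction m with
  | zero => simp
  | succ m ih =>
    have hrec : (2 - 2 * cos s) • cos ((m + 1 : ℕ) * s + θ) • c (m + 1) =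
        (2 * cos ((m + 1 : ℕ) * s + θ)) • c (m + 1) -
          (cos ((m + 1 + 1 : ℕ) * s + θ) + cos (m * s + θ)) • c (m + 1) := by
      rw [← two_mul_cos_mul_cos_succ]
      module
    rw [Finset.sum_range_succ, Finset.sum_range_succ, smul_add, add_add_add_comm, ih, hrec]
    simp only [fwdDiff]
    module

variable {N : ℕ} {C : ℝ} {c : ℕ → F}

lemma IsDyadicBlock.sum_cos_smul_succ (hc : IsDyadicBlock N C c) (s θ : ℝ) :
    ∑ n ∈ Finset.range (4 * N), cos ((n + 1 : ℕ) * s + θ) • c (n + 1) =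
      ∑ n ∈ Finset.range (4 * N), cos (n * s + θ) • c n := by
  have h := Finset.sum_range_succ' (fun n : ℕ => cos (n * s + θ) • c n) (4 * N)
  rwa [Finset.sum_range_succ, hc.eq_zero_of_ge _ le_rfl, hc.eq_zero_of_le 0 N.zero_le, smul_zero,
    smul_zero, add_zero, add_zero, eq_comm] at h

lemma IsDyadicBlock.mul_norm_sum_cos_smul_le (hN : 1 ≤ N) (hc : IsDyadicBlock N C c) (s θ : ℝ) :
    (2 - 2 * cos s) * ‖∑ n ∈ Finset.range (4 * N), cos (n * s + θ) • c n‖ ≤ 4 * C / N := by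
  have : (0 : ℝ) < N := by exact_mod_cast hN
  have hparts := sum_cos_smul_fwdDiff_fwdDiff c s θ (4 * N)
  rw [hc.sum_cos_smul_succ, hc.eq_zero_of_ge _ le_rfl, hc.eq_zero_of_ge _ (Nat.le_succ _),
    hc.eq_zero_of_le 0 N.zero_le, hc.eq_zero_of_le 1 hN] at hparts
  simp only [smul_zero, sub_zero] at hparts
  calc (2 - 2 * cos s) * ‖∑ n ∈ Finset.range (4 * N), cos (n * s + θ) • c n‖
      = ‖(2 - 2 * cos s) • ∑ n ∈ Finset.range (4 * N), cos (n * s + θ) • c n‖ := by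
        rw [norm_smul, Real.norm_of_nonneg (by linarith [cos_le_one s])]
    _ = ‖∑ n ∈ Finset.range (4 * N), cos ((n + 1 : ℕ) * s + θ) • Δ_[1] (Δ_[1] c) n‖ := by
        rw [eq_neg_of_add_eq_zero_right hparts, norm_neg]
    _ ≤ ∑ _n ∈ Finset.range (4 * N), C / N ^ 2 := norm_sum_le_of_le _ fun n _ => by
        rw [norm_smul]
        exact (mul_le_of_le_one_left (norm_nonneg _) (abs_cos_le_one _)).trans
          (hc.norm_fwdDiff_fwdDiff_le n)
    _ = 4 * C / N := by
        rw [Finset.sum_const, Finset.card_range, nsmul_eq_mul]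
        push_cast
        field_simp

lemma IsDyadicBlock.norm_sum_cos_smul_le (hN : 1 ≤ N) (hc : IsDyadicBlock N C c) {s : ℝ}
    (hs : |s| ≤ π) (θ : ℝ) : ‖∑ n ∈ Finset.range (4 * N), cos (n * s + θ) • c n‖ ≤
      14 * C * (N / (1 + (N : ℝ) ^ 2 * s ^ 2)) := by
  have : (0 : ℝ) < N := by exact_mod_cast hN
  set κ := ‖∑ n ∈ Finset.range (4 * N), cos (n * s + θ) • c n‖
  have htriv : κ ≤ 4 * C * N := by
    calc κ ≤ ∑ _n ∈ Finset.range (4 * N), C := norm_sum_le_of_le _ fun n _ => by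
          rw [norm_smul]
          exact (mul_le_of_le_one_left (norm_nonneg _) (abs_cos_le_one _)).trans (hc.norm_le n)
      _ = 4 * C * N := by simp; ring
  have hcos : 2 / 5 * s ^ 2 ≤ 2 - 2 * cos s := by
    have hπ : π ^ 2 ≤ 10 := by nlinarith [pi_lt_d2, pi_pos]
    calc 2 / 5 * s ^ 2 = 2 * (2 / 10 * s ^ 2) := by ring
      _ ≤ 2 * (2 / π ^ 2 * s ^ 2) := by gcongr
      _ ≤ 2 - 2 * cos s := by linarith [cos_le_one_sub_mul_cos_sq hs]
  have hdecay : (N : ℝ) ^ 2 * s ^ 2 * κ ≤ 10 * C * N := by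
    calc (N : ℝ) ^ 2 * s ^ 2 * κ = 5 / 2 * N ^ 2 * (2 / 5 * s ^ 2 * κ) := by ring
      _ ≤ 5 / 2 * N ^ 2 * (4 * C / N) := by
          gcongr
          exact (mul_le_mul_of_nonneg_right hcos (norm_nonneg _)).trans
            (hc.mul_norm_sum_cos_smul_le hN s θ)
      _ = 10 * C * N := by field_simp; ring
  rw [← mul_div_assoc, le_div_iff₀ (by positivity)]
  linarith

end Kernel

section Complexification

variable {E F : Type*} [NormedAddCommGroup E] [NormedSpace ℝ E]
  [NormedAddCommGroup F] [NormedSpace ℝ F]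

lemma L1_injective : Injective (L1 : E × E → ℝ → E) := fun ψ φ h =>
  Prod.ext (by simpa [L1] using congrFun h 0) (by simpa [L1] using congrFun h (-(π / 2)))

lemma L1_csmul_I (ψ : E × E) (s : ℝ) : L1 (csmul Complex.I ψ) s = L1 ψ (s + π / 2) := by
  simp only [L1, csmul, Complex.I_re, Complex.I_im, cos_add_pi_div_two, sin_add_pi_div_two]
  module

lemma csmul_I_mul_injective {n : ℕ} (hn : n ≠ 0) :
    Injective fun ψ : E × E => csmul (Complex.I * n) ψ := fun ψ φ h => by
  have : (n : ℝ) ≠ 0 := mod_cast hn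
  simp_all [csmul, Prod.ext_iff]

lemma L1_smul (c : ℝ) (ψ : E × E) (s : ℝ) : L1 (c • ψ) s = c • L1 ψ s := by
  simp only [L1, Prod.smul_fst, Prod.smul_snd]
  module

lemma L1_AcC (T : E →L[ℝ] F) (ψ : E × E) (s : ℝ) : L1 (AcC T ψ) s = T (L1 ψ s) := by
  simp [L1, AcC]

lemma L1_periodic (ψ : E × E) : Periodic (L1 ψ) (2 * π) := fun s => by
  simp only [L1, cos_add_two_pi, sin_add_two_pi]

lemma hasDerivAt_L1 (ψ : E × E) (s : ℝ) : HasDerivAt (L1 ψ) (L1 ψ (s + π / 2)) s := by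
  refine (((hasDerivAt_cos s).smul_const ψ.1).sub
    ((hasDerivAt_sin s).smul_const ψ.2)).congr_deriv ?_
  simp only [L1, cos_add_pi_div_two, sin_add_pi_div_two]

lemma continuous_L1 (ψ : E × E) : Continuous (L1 ψ) :=
  continuous_iff_continuousAt.2 fun s => (hasDerivAt_L1 ψ s).continuousAt

lemma cos_smul_L1 (ψ : E × E) (a b : ℝ) :
    cos a • L1 ψ b = (2⁻¹ : ℝ) • (L1 ψ (b + a) + L1 ψ (b - a)) := by
  simp only [L1, cos_add, cos_sub, sin_add, sin_sub]
  module

lemma integral_L1_int_mul_add [CompleteSpace E] (ψ : E × E) (k : ℤ) (θ : ℝ) :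
    ∫ t in (0 : ℝ)..2 * π, L1 ψ (k * t + θ) = if k = 0 then (2 * π) • L1 ψ θ else 0 := by
  by_cases hk : k = 0
  · simp [hk]
  have hk' : (k : ℝ) ≠ 0 := mod_cast hk
  have primitive (t : ℝ) :
      HasDerivAt (fun t => (k : ℝ)⁻¹ • L1 ψ (k * t + θ - π / 2)) (L1 ψ (k * t + θ)) t := by
    have inner : HasDerivAt (fun t => k * t + θ - π / 2) (k : ℝ) t := by
      simpa using (((hasDerivAt_id t).const_mul (k : ℝ)).add_const θ).sub_const (π / 2)
    refine (((hasDerivAt_L1 ψ _).scomp t inner).const_smul (k : ℝ)⁻¹).congr_deriv ?_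
    rw [inv_smul_smul₀ hk', sub_add_cancel]
  have hcont : Continuous fun t => L1 ψ (k * t + θ) := (continuous_L1 ψ).comp (by fun_prop)
  have hper := (L1_periodic ψ).int_mul k (θ - π / 2)
  rw [intervalIntegral.integral_eq_sub_of_hasDerivAt (fun t _ => primitive t)
    (hcont.intervalIntegrable _ _), if_neg hk, ← smul_sub, smul_eq_zero, sub_eq_zero]
  right
  convert! hper using 2 <;> ring

variable (E) in
/-- Multiplication by `i` on the complexification `E × E`, as a bounded real-linear map. -/
def mulI : E × E →L[ℝ] E × E :=
  (-ContinuousLinearMap.snd ℝ E E).prod (ContinuousLinearMap.fst ℝ E E)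

lemma csmul_I_eq_mulI (ψ : E × E) : csmul Complex.I ψ = mulI E ψ := by
  simp [csmul, mulI]

lemma norm_mulI (ψ : E × E) : ‖mulI E ψ‖ = ‖ψ‖ := by
  simp [mulI, Prod.norm_def, max_comm]

lemma L1_mulI (ψ : E × E) (s : ℝ) : L1 (mulI E ψ) s = L1 ψ (s + π / 2) := by
  rw [← csmul_I_eq_mulI, L1_csmul_I]

/-- The real part of the restriction of an operator between complexifications to `E`. -/
def rePart : (E × E →L[ℝ] F × F) →L[ℝ] E →L[ℝ] F :=
  (ContinuousLinearMap.postcomp E (ContinuousLinearMap.fst ℝ F F)).comp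
    (ContinuousLinearMap.precomp (F × F) (ContinuousLinearMap.inl ℝ E E))

/-- The imaginary part of the restriction of an operator between complexifications to `E`. -/
def imPart : (E × E →L[ℝ] F × F) →L[ℝ] E →L[ℝ] F :=
  (ContinuousLinearMap.postcomp E (ContinuousLinearMap.snd ℝ F F)).comp
    (ContinuousLinearMap.precomp (F × F) (ContinuousLinearMap.inl ℝ E E))

lemma L1_apply_of_comm_mulI {T : E × E →L[ℝ] F × F} (hT : ∀ ψ, T (mulI E ψ) = mulI F (T ψ))
    (ψ : E × E) (s : ℝ) :
    L1 (T ψ) s = rePart T (L1 ψ s) + imPart T (L1 ψ (s + π / 2)) := by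
  have hψ : ψ = (ψ.1, 0) + mulI E (ψ.2, 0) := by simp [mulI]
  have hTψ : T ψ = T (ψ.1, 0) + mulI F (T (ψ.2, 0)) := by rw [← hT, ← map_add, ← hψ]
  have hre (x : E) : rePart T x = (T (x, 0)).1 := rfl
  have him (x : E) : imPart T x = (T (x, 0)).2 := rfl
  simp only [hTψ, L1, map_sub, map_smul, cos_add_pi_div_two, sin_add_pi_div_two]
  simp only [hre, him, mulI, ContinuousLinearMap.prod_apply, neg_apply,
    ContinuousLinearMap.coe_fst', ContinuousLinearMap.coe_snd', Prod.fst_add,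
    Prod.snd_add]
  module

end Complexification

section FourierCoefficients

variable {E F : Type*} [NormedAddCommGroup E] [NormedSpace ℝ E] [CompleteSpace E]
  [NormedAddCommGroup F] [NormedSpace ℝ F] [CompleteSpace F] {u v g : ℝ → E}

lemma L1_fourierC (hu : Continuous u) (n : ℤ) (s : ℝ) :
    L1 (fourierC u n) s = (2 * π)⁻¹ • ∫ t in (0 : ℝ)..2 * π, cos (s - n * t) • u t := by
  simp only [L1, fourierC, smul_neg, sub_neg_eq_add, smul_comm _ (2 * π)⁻¹, cos_sub, add_smul,
    mul_smul]
  rw [intervalIntegral.integral_add (Continuous.intervalIntegrable (by fun_prop) _ _)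
    (Continuous.intervalIntegrable (by fun_prop) _ _)]
  simp only [intervalIntegral.integral_smul, smul_add]

lemma fourierC_add (hu : Continuous u) (hv : Continuous v) (n : ℤ) :
    fourierC (fun t => u t + v t) n = fourierC u n + fourierC v n := by
  simp only [fourierC, smul_add, Prod.mk_add_mk, ← neg_add]
  rw [intervalIntegral.integral_add, intervalIntegral.integral_add, smul_add, smul_add] <;>
    exact Continuous.intervalIntegrable (by fun_prop) _ _

lemma fourierC_map (hu : Continuous u) (T : E →L[ℝ] F) (n : ℤ) :
    fourierC (fun t => T (u t)) n = AcC T (fourierC u n) := by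
  refine L1_injective (funext fun s => ?_)
  have hcont : Continuous fun t => cos (s - n * t) • u t := by fun_prop
  rw [L1_AcC, L1_fourierC hu, L1_fourierC (by fun_prop), map_smul,
    ← T.intervalIntegral_comp_comm (hcont.intervalIntegrable _ _)]
  simp only [map_smul]

lemma fourierC_sub (hu : Continuous u) (hv : Continuous v) (n : ℤ) :
    fourierC (fun t => u t - v t) n = fourierC u n - fourierC v n := by
  have hneg := fourierC_map hv (-ContinuousLinearMap.id ℝ E) n
  have hadd := fourierC_add hu (v := fun t => -v t) (by fun_prop) n
  simp_all [AcC, sub_eq_add_neg, Prod.ext_iff]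

lemma fourierC_finset_sum {ι : Type*} (s : Finset ι) {f : ι → ℝ → E} (hf : ∀ i, Continuous (f i))
    (n : ℤ) : fourierC (fun t => ∑ i ∈ s, f i t) n = ∑ i ∈ s, fourierC (f i) n := by
  classical
  induction s using Finset.induction_on with
  | empty => simp [fourierC]
  | insert i s hi ih =>
    simp only [Finset.sum_insert hi, ← ih]
    exact fourierC_add (hf i) (by fun_prop) n

lemma fourierC_neg (u : ℝ → E) (n : ℤ) : fourierC u (-n) = conjC (fourierC u n) := by
  simp [fourierC, conjC]

lemma fourierC_const (c : E) {n : ℤ} (hn : n ≠ 0) : fourierC (fun _ => c) n = 0 := by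
  refine L1_injective (funext fun s => ?_)
  have hint := integral_L1_int_mul_add (c, (0 : E)) (-n) s
  rw [L1_fourierC continuous_const]
  simp_all [L1, sub_eq_neg_add]

lemma fourierC_const_zero (c : E) : fourierC (fun _ => c) 0 = (c, 0) := by
  have : 2 * π ≠ 0 := two_pi_pos.ne'
  simp [fourierC, -mul_inv_rev, inv_smul_smul₀ this]

lemma fourierC_deriv (hv : ∀ t, HasDerivAt v (g t) t) (hg : Continuous g)
    (hper : Periodic v (2 * π)) (n : ℤ) :
    fourierC g n = csmul (Complex.I * n) (fourierC v n) := by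
  have hvc : Continuous v := continuous_iff_continuousAt.2 fun t => (hv t).continuousAt
  have hI (ψ : E × E) : csmul (Complex.I * n) ψ = (n : ℝ) • csmul Complex.I ψ := by
    simp [csmul]
  refine L1_injective (funext fun s => ?_)
  have hderiv (t : ℝ) : HasDerivAt (fun t => cos (s - n * t) • v t)
      (cos (s - n * t) • g t - (n : ℝ) • (cos (s + π / 2 - n * t) • v t)) t := by
    have inner : HasDerivAt (fun t => s - n * t) (-(n : ℝ)) t := by
      simpa using ((hasDerivAt_id t).const_mul (n : ℝ)).const_sub s
    refine (inner.cos.smul (hv t)).congr_deriv ?_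
    rw [add_sub_right_comm, cos_add_pi_div_two]
    module
  have hftc := intervalIntegral.integral_eq_sub_of_hasDerivAt (a := 0) (b := 2 * π)
    (fun t _ => hderiv t) (Continuous.intervalIntegrable (by fun_prop) _ _)
  have hbdry : cos (s - n * (2 * π)) • v (2 * π) = cos (s - n * 0) • v 0 := by
    rw [cos_sub_int_mul_two_pi, mul_zero, sub_zero, ← hper 0, zero_add]
  rw [hbdry, sub_self, intervalIntegral.integral_sub
    (Continuous.intervalIntegrable (by fun_prop) _ _)
    (Continuous.intervalIntegrable (by fun_prop) _ _), intervalIntegral.integral_smul,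
    sub_eq_zero] at hftc
  rw [hI, L1_smul, L1_csmul_I, L1_fourierC hg, L1_fourierC hvc, hftc, smul_comm]

lemma fourierC_L1_nat_mul (ψ : E × E) {n : ℕ} (hn : n ≠ 0) (m : ℕ) :
    fourierC (fun t => L1 ψ (n * t)) m = if n = m then (2⁻¹ : ℝ) • ψ else 0 := by
  have hcont : Continuous (L1 ψ) := continuous_L1 ψ
  refine L1_injective (funext fun s => ?_)
  have hprod (t : ℝ) : cos (s - m * t) • L1 ψ (n * t) =
      (2⁻¹ : ℝ) • (L1 ψ ((n - m : ℤ) * t + s) + L1 ψ ((n + m : ℤ) * t + -s)) := by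
    rw [cos_smul_L1]
    push_cast
    ring_nf
  rw [L1_fourierC (by fun_prop)]
  simp only [Int.cast_natCast, hprod, intervalIntegral.integral_smul]
  rw [intervalIntegral.integral_add (Continuous.intervalIntegrable (by fun_prop) _ _)
      (Continuous.intervalIntegrable (by fun_prop) _ _),
    integral_L1_int_mul_add, integral_L1_int_mul_add, if_neg (by lia : (n : ℤ) + m ≠ 0)]
  by_cases hnm : n = m
  · have : π ≠ 0 := pi_ne_zero
    simp only [hnm, sub_self, if_true, add_zero, L1_smul, smul_smul]
    congr 1
    field_simp
  · simp [hnm, sub_eq_zero, L1]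

lemma two_smul_L1_fourierC (hu : Continuous u) (hper : Periodic u (2 * π)) {n : ℕ} (hn : n ≠ 0)
    (t θ : ℝ) : (2 : ℝ) • L1 (fourierC u n) (n * t + θ) =
      π⁻¹ • ∫ s in -π..π, cos (n * s + θ) • (u (t - s) - u t) := by
  have hdiff := fourierC_sub hu (continuous_const (y := u t)) n
  rw [fourierC_const _ (mod_cast hn), sub_zero] at hdiff
  set f : ℝ → E := fun s => cos (n * (t - s) + θ) • (u s - u t)
  have hf : Periodic f (2 * π) := fun s => by
    simp only [f, hper s]
    congr 1
    rw [← cos_sub_nat_mul_two_pi (n * (t - s) + θ) n]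
    ring_nf
  have hshift : ∫ s in -π..π, cos (n * s + θ) • (u (t - s) - u t) =
      ∫ s in (0 : ℝ)..2 * π, f s := by
    calc ∫ s in -π..π, cos (n * s + θ) • (u (t - s) - u t)
      _ = ∫ s in -π..π, f (t - s) := by simp only [f, sub_sub_cancel]
      _ = ∫ s in t - π..t - π + 2 * π, f s := by
        rw [intervalIntegral.integral_comp_sub_left]
        ring_nf
      _ = ∫ s in (0 : ℝ)..2 * π, f s := by
        rw [hf.intervalIntegral_add_eq (t - π) 0, zero_add]
  rw [← hdiff, L1_fourierC (by fun_prop), hshift, smul_smul]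
  congr 1
  · field_simp
  · refine intervalIntegral.integral_congr fun s _ => ?_
    simp only [f, Int.cast_natCast]
    ring_nf

lemma fourierC_eq_zero_of_forall_nat (h : ∀ n : ℕ, fourierC u n = 0) (n : ℤ) :
    fourierC u n = 0 := by
  obtain ⟨m, rfl | rfl⟩ := n.eq_nat_or_neg
  · exact h m
  · simp [fourierC_neg, h, conjC]

lemma forall_fourierC_eq_zero_iff_lt_two :
    (∀ n : ℤ, n = -1 ∨ n = 0 ∨ n = 1 → fourierC u n = 0) ↔
      ∀ m : ℕ, m < 2 → fourierC u m = 0 := by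
  refine ⟨fun h m hm => h m (by lia), fun h n hn => ?_⟩
  rcases hn with rfl | rfl | rfl
  · simp [fourierC_neg, conjC, show fourierC u 1 = 0 from h 1 one_lt_two]
  · exact h 0 two_pos
  · exact h 1 one_lt_two

lemma fourierCoeff_lift_ofReal [Fact (0 < 2 * π)] {f : ℝ → ℝ} (hf : Continuous f)
    (hper : Periodic (fun t => (f t : ℂ)) (2 * π)) (n : ℤ) :
    fourierCoeff hper.lift n = (fourierC f n).1 + (fourierC f n).2 * Complex.I := by
  have hintegrand (t : ℝ) : fourier (-n) (t : AddCircle (2 * π)) • hper.lift t =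
      ((cos (n * t) * f t : ℝ) : ℂ) - ((sin (n * t) * f t : ℝ) : ℂ) * Complex.I := by
    have hexponent : 2 * (π : ℂ) * Complex.I * ((-n : ℤ) : ℂ) * t / ((2 * π : ℝ) : ℂ) =
        -((n * t : ℝ) : ℂ) * Complex.I := by
      have : (π : ℂ) ≠ 0 := mod_cast pi_ne_zero
      push_cast
      field_simp
    rw [hper.lift_coe, fourier_coe_apply, hexponent, Complex.exp_mul_I, Complex.cos_neg,
      Complex.sin_neg, smul_eq_mul]
    push_cast
    ring
  rw [fourierCoeff_eq_intervalIntegral _ n 0, zero_add]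
  simp_rw [hintegrand]
  rw [intervalIntegral.integral_sub (Continuous.intervalIntegrable (by fun_prop) _ _)
      (Continuous.intervalIntegrable (by fun_prop) _ _), intervalIntegral.integral_mul_const,
    intervalIntegral.integral_ofReal, intervalIntegral.integral_ofReal]
  simp only [fourierC, smul_eq_mul, Complex.real_smul, one_div]
  push_cast
  ring

lemma eq_zero_of_fourierC_real {f : ℝ → ℝ} (hf : Continuous f) (hper : Periodic f (2 * π))
    (h : ∀ n : ℕ, fourierC f n = 0) (t : ℝ) : f t = 0 := by
  have : Fact (0 < 2 * π) := ⟨two_pi_pos⟩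
  have hperC : Periodic (fun t => (f t : ℂ)) (2 * π) := hper.comp Complex.ofReal
  let φ : C(AddCircle (2 * π), ℂ) :=
    ⟨hperC.lift, continuous_coinduced_dom.2 (Complex.continuous_ofReal.comp hf)⟩
  have hcoeff : fourierCoeff φ = 0 := funext fun n => by
    simp [φ, fourierCoeff_lift_ofReal hf hperC, fourierC_eq_zero_of_forall_nat h]
  have hseries := hasSum_fourier_series_of_summable (f := φ) (hcoeff ▸ summable_zero)
  simp only [hcoeff, Pi.zero_apply, zero_smul] at hseries
  have hφ : (f t : ℂ) = φ t := rfl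
  rw [hseries.unique hasSum_zero, ContinuousMap.zero_apply] at hφ
  exact mod_cast hφ

lemma eq_zero_of_fourierC (hu : Continuous u) (hper : Periodic u (2 * π))
    (h : ∀ n : ℕ, fourierC u n = 0) (t : ℝ) : u t = 0 := by
  refine SeparatingDual.eq_zero_of_forall_dual_eq_zero (R := ℝ) fun ℓ => ?_
  refine eq_zero_of_fourierC_real (ℓ.continuous.comp hu) (hper.comp ℓ) (fun n => ?_) t
  exact (fourierC_map hu ℓ n).trans (by simp [h, AcC])

lemma eq_of_fourierC (hu : Continuous u) (hv : Continuous v) (huper : Periodic u (2 * π))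
    (hvper : Periodic v (2 * π)) (h : ∀ n : ℕ, fourierC u n = fourierC v n) : u = v :=
  funext fun t => sub_eq_zero.1 <| eq_zero_of_fourierC (hu.sub hv) (huper.sub hvper)
    (fun n => by rw [← sub_eq_zero.2 (h n), ← fourierC_sub hu hv]; rfl) t

lemma periodic_integral (hg : Continuous g) (hper : Periodic g (2 * π))
    (hmean : fourierC g 0 = 0) : Periodic (fun t => ∫ s in (0 : ℝ)..t, g s) (2 * π) := by
  have hint : ∫ s in (0 : ℝ)..2 * π, g s = 0 := by
    simpa [fourierC, pi_ne_zero] using hmean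
  intro t
  dsimp only
  rw [← intervalIntegral.integral_add_adjacent_intervals (hg.intervalIntegrable 0 t)
    (hg.intervalIntegrable _ _), hper.intervalIntegral_add_eq t 0, zero_add, hint, add_zero]

lemma eq_mean_of_fourierC (hu : Continuous u) (hper : Periodic u (2 * π))
    (h : ∀ n : ℕ, n ≠ 0 → fourierC u n = 0) (t : ℝ) : u t = (fourierC u 0).1 := by
  refine sub_eq_zero.1 (eq_zero_of_fourierC (u := fun t => u t - (fourierC u 0).1)
    (by fun_prop) (fun t => by simp only [hper t]) (fun n => ?_) t)
  rw [fourierC_sub hu continuous_const]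
  obtain rfl | hn := eq_or_ne n 0
  · rw [Nat.cast_zero, fourierC_const_zero]
    simp [fourierC]
  · rw [h n hn, fourierC_const _ (mod_cast hn), sub_zero]

lemma hasDerivAt_of_fourierC (hv : Continuous v) (hvper : Periodic v (2 * π))
    (hg : Continuous g) (hgper : Periodic g (2 * π))
    (h : ∀ n : ℕ, fourierC g n = csmul (Complex.I * n) (fourierC v n)) (t : ℝ) :
    HasDerivAt v (g t) t := by
  set G : ℝ → E := fun t => ∫ s in (0 : ℝ)..t, g s
  have hG (t : ℝ) : HasDerivAt G (g t) t := (hg.integral_hasStrictDerivAt 0 t).hasDerivAt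
  have hGper : Periodic G (2 * π) :=
    periodic_integral hg hgper ((h 0).trans (by simp [csmul]))
  have hGc : Continuous G := continuous_iff_continuousAt.2 fun t => (hG t).continuousAt
  have hcoeff (n : ℕ) (hn : n ≠ 0) : fourierC v n = fourierC G n :=
    csmul_I_mul_injective hn ((h n).symm.trans (mod_cast fourierC_deriv hG hg hGper n))
  have hsub := eq_mean_of_fourierC (u := fun t => v t - G t) (by fun_prop)
    (fun t => by simp only [hvper t, hGper t])
    (fun n hn => by rw [fourierC_sub hv hGc, hcoeff n hn, sub_self])
  refine ((hG t).add_const (fourierC (fun t => v t - G t) 0).1).congr_of_eventuallyEq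
    (Eventually.of_forall fun s => ?_)
  simp only [← hsub s, add_sub_cancel]

lemma hasSum_L1_fourierC {f : ℕ → ℝ → E} {b : ℕ → ℝ} (hf : ∀ j, Continuous (f j))
    (hb : Summable b) (hfb : ∀ j t, ‖f j t‖ ≤ b j) (n : ℤ) (s : ℝ) :
    HasSum (fun j => L1 (fourierC (f j) n) s) (L1 (fourierC (fun t => ∑' j, f j t) n) s) := by
  simp only [L1_fourierC (continuous_tsum hf hb hfb), L1_fourierC (hf _)]
  refine HasSum.const_smul _ (intervalIntegral.hasSum_integral_of_dominated_convergence
    (fun j _ => b j) (fun j => Continuous.aestronglyMeasurable (by fun_prop))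
    (fun j => Eventually.of_forall fun t _ => ?_) (Eventually.of_forall fun _ _ => hb)
    intervalIntegrable_const (Eventually.of_forall fun t _ => ?_))
  · rw [norm_smul]
    exact (mul_le_of_le_one_left (norm_nonneg _) (abs_cos_le_one _)).trans (hfb j t)
  · exact (hb.of_norm_bounded fun j => hfb j t).hasSum.const_smul _

end FourierCoefficients

section FourierMultiplier

open scoped fwdDiff

variable {E F : Type*} [NormedAddCommGroup E] [NormedSpace ℝ E] [CompleteSpace E]
  [NormedAddCommGroup F] [NormedSpace ℝ F] {β : ℝ} {y : ℝ → E}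

lemma sum_L1_fourierC_eq_integral [CompleteSpace F] (hy : Continuous y) (hper : Periodic y (2 * π))
    {c : ℕ → E →L[ℝ] F} (hc : c 0 = 0) (m : ℕ) (t θ : ℝ) :
    ∑ n ∈ Finset.range m, c n ((2 : ℝ) • L1 (fourierC y n) (n * t + θ)) =
      π⁻¹ • ∫ s in -π..π,
        (∑ n ∈ Finset.range m, cos (n * s + θ) • c n) (y (t - s) - y t) := by
  simp only [sum_apply, smul_apply]
  rw [intervalIntegral.integral_finsetSum fun n _ =>
    Continuous.intervalIntegrable (by fun_prop) _ _, Finset.smul_sum]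
  refine Finset.sum_congr rfl fun n _ => ?_
  obtain rfl | hn := eq_or_ne n 0
  · simp [hc]
  · rw [two_smul_L1_fourierC hy hper hn, map_smul, ← (c n).intervalIntegral_comp_comm
      (Continuous.intervalIntegrable (by fun_prop) _ _)]
    simp only [map_smul]

lemma exists_norm_sum_L1_fourierC_le [CompleteSpace F] (hβ : β ∈ Ioo (0 : ℝ) 1)
    (hy : MemHolder β y) :
    ∃ K : ℝ, ∀ (N : ℕ) (C : ℝ) (c : ℕ → E →L[ℝ] F), 1 ≤ N → IsDyadicBlock N C c → ∀ t θ : ℝ,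
      ‖∑ n ∈ Finset.range (4 * N), c n ((2 : ℝ) • L1 (fourierC y n) (n * t + θ))‖ ≤
        K * C * (N : ℝ) ^ (-β) := by
  obtain ⟨H, hH⟩ := hy.2
  obtain ⟨I, hI⟩ := exists_integral_weight_le hβ
  have hH₀ : 0 ≤ H := by simpa using (norm_nonneg _).trans (hH 1 0)
  refine ⟨π⁻¹ * 14 * H * I, fun N C c hN hc t θ => ?_⟩
  have hC : 0 ≤ C := (norm_nonneg _).trans (hc.norm_le 0)
  have hN₀ : (0 : ℝ) < N := mod_cast hN
  set w : ℝ → ℝ := fun s => N / (1 + (N : ℝ) ^ 2 * s ^ 2) * |s| ^ β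
  have hw : Continuous w := by
    have (s : ℝ) : 1 + (N : ℝ) ^ 2 * s ^ 2 ≠ 0 := by positivity
    exact (continuous_const.div (by fun_prop) this).mul
      (continuous_abs.rpow_const fun _ => Or.inr hβ.1.le)
  have hint : ‖∫ s in -π..π,
      (∑ n ∈ Finset.range (4 * N), cos (n * s + θ) • c n) (y (t - s) - y t)‖ ≤
        14 * C * H * ∫ s in -π..π, w s := by
    rw [← intervalIntegral.integral_const_mul]
    refine intervalIntegral.norm_integral_le_of_norm_le (by linarith [pi_pos])
      (Eventually.of_forall fun s hs => ?_) ((hw.const_mul _).intervalIntegrable _ _)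
    have hker := hc.norm_sum_cos_smul_le hN (abs_le.2 ⟨hs.1.le, hs.2⟩) θ
    have hosc : ‖y (t - s) - y t‖ ≤ H * |s| ^ β := by simpa using hH (t - s) t
    calc _ ≤ 14 * C * (N / (1 + (N : ℝ) ^ 2 * s ^ 2)) * (H * |s| ^ β) :=
          ContinuousLinearMap.le_of_opNorm_le_of_le _ hker hosc
      _ = 14 * C * H * w s := by ring
  rw [sum_L1_fourierC_eq_integral (hy.continuous hβ.1) hy.1 (hc.eq_zero_of_le 0 N.zero_le),
    norm_smul, norm_of_nonneg (inv_nonneg.2 pi_pos.le)]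
  calc _ ≤ π⁻¹ * (14 * C * H * (I * (N : ℝ) ^ (-β))) := by
        have := hI N hN₀
        gcongr
        exact hint.trans (by gcongr)
    _ = _ := by ring

/-- The piece `∑ g(n/N) 2 Re (Sₙ ŷ(n) eⁱⁿᵗ)` of the Fourier multiplier operator with symbol `S`;
the sum is over all relevant frequencies when `g` is supported in `(1, 4)`. -/
def dyadicPiece (g : ℝ → ℝ) (S : ℕ → E × E →L[ℝ] F × F) (y : ℝ → E) (N : ℕ) (t : ℝ) : F :=
  ∑ n ∈ Finset.range (4 * N), g (n / N) • (2 : ℝ) • L1 (S n (fourierC y n)) (n * t)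

variable {g : ℝ → ℝ} {S : ℕ → E × E →L[ℝ] F × F} {N : ℕ}

lemma dyadicPiece_periodic : Periodic (dyadicPiece g S y N) (2 * π) := fun t => by
  refine Finset.sum_congr rfl fun n _ => ?_
  rw [mul_add, (L1_periodic (S n (fourierC y n))).nat_mul n]

lemma hasDerivAt_dyadicPiece (hN : 1 ≤ N) (t : ℝ) :
    HasDerivAt (dyadicPiece g S y N)
      ((N : ℝ) • dyadicPiece (fun x => x * g x) (fun n => (mulI F).comp (S n)) y N t) t := by
  have hN₀ : (N : ℝ) ≠ 0 := by positivity
  simp only [dyadicPiece, Finset.smul_sum]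
  refine HasDerivAt.fun_sum fun n _ => ?_
  have inner : HasDerivAt (fun t : ℝ => n * t) (n : ℝ) t := by
    simpa using (hasDerivAt_id t).const_mul (n : ℝ)
  refine ((((hasDerivAt_L1 (S n (fourierC y n)) (n * t)).scomp t inner).const_smul
    (2 : ℝ)).const_smul (g (n / N))).congr_deriv ?_
  simp only [ContinuousLinearMap.comp_apply, L1_mulI, smul_smul]
  congr 1
  field_simp

lemma continuous_dyadicPiece : Continuous (dyadicPiece g S y N) :=
  continuous_finsetSum _ fun _ _ =>
    (((continuous_L1 _).comp (continuous_const.mul continuous_id)).const_smul _).const_smul _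

lemma fourierC_dyadicPiece [CompleteSpace F] (hN : 1 ≤ N) (hsupp : support g ⊆ Ioo 1 4) (m : ℕ) :
    fourierC (dyadicPiece g S y N) m = g (m / N) • S m (fourierC y m) := by
  have hg {x : ℝ} (hx : x ∉ Ioo 1 4) : g x = 0 := notMem_support.1 fun h => hx (hsupp h)
  have hterm (n : ℕ) : fourierC (fun t => g (n / N) • (2 : ℝ) • L1 (S n (fourierC y n)) (n * t)) m
      = if n = m then g (n / N) • S n (fourierC y n) else 0 := by
    obtain rfl | hn := eq_or_ne n 0
    · simp [hg, fourierC]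
    · simp only [← L1_smul, fourierC_L1_nat_mul _ hn, smul_comm (2⁻¹ : ℝ),
        smul_inv_smul₀ (two_ne_zero' ℝ)]
  have hL1 (ψ : F × F) : Continuous (L1 ψ) := continuous_L1 ψ
  unfold dyadicPiece
  rw [fourierC_finset_sum _ fun n => by fun_prop]
  simp only [hterm, Finset.sum_ite_eq', Finset.mem_range]
  refine ite_eq_left_iff.2 fun hm => ?_
  rw [hg, zero_smul]
  have hN₀ : (0 : ℝ) < N := mod_cast hN
  have hm₄ : (4 : ℝ) * N ≤ m := mod_cast not_lt.1 hm
  exact fun h => h.2.not_ge ((le_div_iff₀ hN₀).2 hm₄)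

lemma exists_norm_dyadicPiece_le [CompleteSpace F] (hβ : β ∈ Ioo (0 : ℝ) 1) (hy : MemHolder β y)
    (hS : IsMarcinkiewicz S) (hcomm : ∀ n ψ, S n (mulI E ψ) = mulI F (S n ψ))
    (hg : ContDiff ℝ 2 g) (hsupp : support g ⊆ Ioo 1 4) :
    ∃ K : ℝ, ∀ N : ℕ, 1 ≤ N → ∀ t, ‖dyadicPiece g S y N t‖ ≤ K * (N : ℝ) ^ (-β) := by
  obtain ⟨C, hC⟩ := exists_isDyadicBlock hg hsupp
  obtain ⟨D₁, hD₁⟩ := (hS.map rePart).exists_bound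
  obtain ⟨D₂, hD₂⟩ := (hS.map imPart).exists_bound
  obtain ⟨K, hK⟩ := exists_norm_sum_L1_fourierC_le (F := F) hβ hy
  refine ⟨K * (4 * (C * D₁)) + K * (4 * (C * D₂)), fun N hN t => ?_⟩
  have hre := hK N _ _ hN ((hC N hN).smul hN fun n => hD₁ N n hN) t 0
  have him := hK N _ _ hN ((hC N hN).smul hN fun n => hD₂ N n hN) t (π / 2)
  rw [add_mul]
  refine le_trans (le_of_eq ?_) ((norm_add_le _ _).trans (add_le_add hre him))
  rw [dyadicPiece, ← Finset.sum_add_distrib]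
  congr 1
  refine Finset.sum_congr rfl fun n _ => ?_
  simp only [L1_apply_of_comm_mulI (hcomm n), Pi.smul_apply', smul_apply, map_smul, smul_add,
    add_zero, smul_comm (2 : ℝ)]

variable [CompleteSpace F]

lemma exists_dyadicPiece_bounds (hβ : β ∈ Ioo (0 : ℝ) 1) (hy : MemHolder β y)
    (hS : IsMarcinkiewicz S) (hcomm : ∀ n ψ, S n (mulI E ψ) = mulI F (S n ψ))
    (hg : ContDiff ℝ 2 g) (hsupp : support g ⊆ Ioo 1 4) :
    ∃ K : ℝ, ∀ N : ℕ, 1 ≤ N → (∀ t, ‖dyadicPiece g S y N t‖ ≤ K * (N : ℝ) ^ (-β)) ∧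
      ∀ t s, ‖dyadicPiece g S y N t - dyadicPiece g S y N s‖ ≤
        K * (N : ℝ) ^ (1 - β) * |t - s| := by
  obtain ⟨K₁, hK₁⟩ := exists_norm_dyadicPiece_le hβ hy hS hcomm hg hsupp
  have hIS : IsMarcinkiewicz fun n => (mulI F).comp (S n) :=
    hS.map (F := E × E →L[ℝ] F × F) (ContinuousLinearMap.postcomp (E × E) (mulI F))
  obtain ⟨K₂, hK₂⟩ := exists_norm_dyadicPiece_le hβ hy hIS
    (fun n ψ => congrArg (mulI F) (hcomm n ψ))
    (contDiff_id.mul hg) ((support_mul_subset_right _ g).trans hsupp)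
  refine ⟨max K₁ K₂, fun N hN => ⟨fun t => (hK₁ N hN t).trans ?_, fun t s => ?_⟩⟩
  · gcongr
    exact le_max_left _ _
  · have hN₀ : (0 : ℝ) < N := mod_cast hN
    refine Convex.norm_image_sub_le_of_norm_hasDerivWithin_le
      (fun t _ => (hasDerivAt_dyadicPiece hN t).hasDerivWithinAt) (fun t _ => ?_) convex_univ
      (mem_univ s) (mem_univ t)
    rw [norm_smul, norm_of_nonneg hN₀.le, sub_eq_add_neg, rpow_add hN₀, rpow_one]
    calc _ ≤ N * (K₂ * (N : ℝ) ^ (-β)) := by gcongr; exact hK₂ N hN t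
      _ ≤ N * (max K₁ K₂ * (N : ℝ) ^ (-β)) := by gcongr; exact le_max_right _ _
      _ = _ := by ring

theorem IsMarcinkiewicz.exists_memHolder_fourierC_eq (hS : IsMarcinkiewicz S)
    (hcomm : ∀ n ψ, S n (mulI E ψ) = mulI F (S n ψ)) (hβ : β ∈ Ioo (0 : ℝ) 1)
    (hy : MemHolder β y) : ∃ u : ℝ → F, MemHolder β u ∧
      ∀ m : ℕ, fourierC u m = if 2 ≤ m then S m (fourierC y m) else 0 := by
  obtain ⟨K, hK⟩ := exists_dyadicPiece_bounds hβ hy hS hcomm contDiff_dyadicBump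
    support_dyadicBump_subset
  set u : ℕ → ℝ → F := fun j => dyadicPiece dyadicBump S y (2 ^ j)
  have hsize (j : ℕ) (t : ℝ) : ‖u j t‖ ≤ K * ((2 : ℝ) ^ j) ^ (-β) :=
    mod_cast (hK (2 ^ j) Nat.one_le_two_pow).1 t
  have hlip (j : ℕ) (t s : ℝ) : ‖u j t - u j s‖ ≤ K * ((2 : ℝ) ^ j) ^ (1 - β) * |t - s| :=
    mod_cast (hK (2 ^ j) Nat.one_le_two_pow).2 t s
  refine ⟨_, memHolder_tsum hβ (fun _ => dyadicPiece_periodic) hsize hlip, fun m => ?_⟩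
  refine L1_injective (funext fun s => ?_)
  have hsum := hasSum_L1_fourierC (f := u) (fun j => continuous_dyadicPiece)
    ((summable_two_pow_rpow_neg hβ.1).mul_left K) hsize m s
  simp only [u, fourierC_dyadicPiece Nat.one_le_two_pow support_dyadicBump_subset, L1_smul] at hsum
  rw [hsum.unique ((hasSum_dyadicBump m).smul_const _), ← L1_smul, ite_smul, one_smul, zero_smul]

end FourierMultiplier

section Resolvent

open Asymptotics ContinuousLinearMap
open scoped fwdDiff

variable {E F G : Type*} [NormedAddCommGroup E] [NormedSpace ℝ E]
  [NormedAddCommGroup F] [NormedSpace ℝ F] [NormedAddCommGroup G] [NormedSpace ℝ G]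
  {D A : E →L[ℝ] F}

/-- The resolvent `(n D - A)⁻¹` of the operator pencil `s ↦ s D - A` at the natural number `n`, or
`0` if `n D - A` is not invertible. -/
def pencilResolvent (D A : E →L[ℝ] F) (n : ℕ) : F →L[ℝ] E := ((n : ℝ) • D - A).inverse

lemma pencilResolvent_sub {m n : ℕ} (hm : ((m : ℝ) • D - A).IsInvertible)
    (hn : ((n : ℝ) • D - A).IsInvertible) :
    pencilResolvent D A m - pencilResolvent D A n =
      ((n : ℝ) - m) • pencilResolvent D A m ∘L D ∘L pencilResolvent D A n := by
  have hl : pencilResolvent D A m ∘L ((m : ℝ) • D - A) = .id ℝ E := hm.inverse_comp_self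
  have hr : ((n : ℝ) • D - A) ∘L pencilResolvent D A n = .id ℝ F := hn.self_comp_inverse
  calc pencilResolvent D A m - pencilResolvent D A n
      = pencilResolvent D A m ∘L (((n : ℝ) • D - A) ∘L pencilResolvent D A n) -
          (pencilResolvent D A m ∘L ((m : ℝ) • D - A)) ∘L pencilResolvent D A n := by
        rw [hl, hr, ContinuousLinearMap.comp_id, ContinuousLinearMap.id_comp]
    _ = pencilResolvent D A m ∘L (((n : ℝ) • D - A) - ((m : ℝ) • D - A)) ∘L
          pencilResolvent D A n := by
        rw [ContinuousLinearMap.comp_assoc, ← comp_sub, ← sub_comp]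
    _ = ((n : ℝ) - m) • pencilResolvent D A m ∘L D ∘L pencilResolvent D A n := by
        rw [sub_sub_sub_cancel_right, ← sub_smul, smul_comp, comp_smul]

lemma pencilResolvent_sub' {m n : ℕ} (hm : ((m : ℝ) • D - A).IsInvertible)
    (hn : ((n : ℝ) • D - A).IsInvertible) :
    pencilResolvent D A m - pencilResolvent D A n =
      ((n : ℝ) - m) • pencilResolvent D A n ∘L D ∘L pencilResolvent D A m := by
  rw [← neg_sub (pencilResolvent D A n), pencilResolvent_sub hn hm, ← neg_smul, neg_sub]

lemma fwdDiff_pencilResolvent {n : ℕ} (h₀ : ((n : ℝ) • D - A).IsInvertible)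
    (h₁ : (((n + 1 : ℕ) : ℝ) • D - A).IsInvertible) :
    Δ_[1] (pencilResolvent D A) n =
      -(pencilResolvent D A (n + 1) ∘L D ∘L pencilResolvent D A n) := by
  rw [fwdDiff, pencilResolvent_sub h₁ h₀, ← neg_one_smul ℝ]
  congr 1
  push_cast
  ring

lemma fwdDiff_fwdDiff_pencilResolvent {n : ℕ} (h₀ : ((n : ℝ) • D - A).IsInvertible)
    (h₁ : (((n + 1 : ℕ) : ℝ) • D - A).IsInvertible)
    (h₂ : (((n + 2 : ℕ) : ℝ) • D - A).IsInvertible) :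
    Δ_[1] (Δ_[1] (pencilResolvent D A)) n = (2 : ℝ) • pencilResolvent D A (n + 1) ∘L
      (D ∘L pencilResolvent D A (n + 2)) ∘L (D ∘L pencilResolvent D A n) := by
  have h₂₁ : Δ_[1] (pencilResolvent D A) (n + 1) =
      -(pencilResolvent D A (n + 1) ∘L D ∘L pencilResolvent D A (n + 2)) := by
    rw [fwdDiff, pencilResolvent_sub' h₂ h₁, ← neg_one_smul ℝ]
    congr 1
    push_cast
    ring
  have h₂₀ : pencilResolvent D A (n + 2) - pencilResolvent D A n =
      -((2 : ℝ) • pencilResolvent D A (n + 2) ∘L D ∘L pencilResolvent D A n) := by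
    rw [pencilResolvent_sub h₂ h₀, ← neg_smul]
    congr 1
    push_cast
    ring
  rw [fwdDiff, h₂₁, fwdDiff_pencilResolvent h₀ h₁, neg_sub_neg, ← neg_sub, ← comp_sub, ← comp_sub,
    h₂₀]
  simp only [comp_neg, neg_neg, comp_smul]
  rfl

lemma pencilResolvent_comm {J : E →L[ℝ] E} {K : F →L[ℝ] F} (hD : ∀ x, D (J x) = K (D x))
    (hA : ∀ x, A (J x) = K (A x)) (n : ℕ) (y : F) :
    pencilResolvent D A n (K y) = J (pencilResolvent D A n y) := by
  by_cases hn : ((n : ℝ) • D - A).IsInvertible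
  · obtain ⟨x, rfl⟩ := hn.surjective y
    have hpencil : K (((n : ℝ) • D - A) x) = ((n : ℝ) • D - A) (J x) := by
      simp only [sub_apply, smul_apply, hD, hA, map_sub, map_smul]
    rw [hpencil, pencilResolvent, hn.inverse_apply_self, hn.inverse_apply_self]
  · simp [pencilResolvent, inverse_of_not_isInvertible hn]

lemma isBigO_comp_of_isBigO_one {S : ℕ → F →L[ℝ] G} {T : ℕ → E →L[ℝ] F} {f : ℕ → ℝ}
    (hS : S =O[atTop] fun _ => (1 : ℝ)) (hT : T =O[atTop] f) :
    (fun n => S n ∘L T n) =O[atTop] f := by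
  simpa using isBoundedBilinearMap_comp.isBigO_comp.trans (hS.norm_left.mul hT.norm_left)

lemma isBigO_one_pencilResolvent (hinv : ∀ᶠ n : ℕ in atTop, ((n : ℝ) • D - A).IsInvertible)
    (hdecay : (fun n => D ∘L pencilResolvent D A n) =O[atTop] fun n => ((n : ℝ) + 1)⁻¹) :
    pencilResolvent D A =O[atTop] fun _ => (1 : ℝ) := by
  obtain ⟨N, hN⟩ := hinv.exists
  have hdist : (fun n : ℕ => (N : ℝ) - n) =O[atTop] fun n => (n : ℝ) + 1 := by
    refine IsBigO.of_bound (N + 1) (.of_forall fun n => ?_)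
    rw [Real.norm_eq_abs, Real.norm_of_nonneg (by positivity), abs_le]
    constructor <;> nlinarith [N.cast_nonneg (α := ℝ), n.cast_nonneg (α := ℝ)]
  have hdiff : (fun n : ℕ => ((N : ℝ) - n) • pencilResolvent D A N ∘L
      D ∘L pencilResolvent D A n) =O[atTop] fun _ => (1 : ℝ) := by
    refine (hdist.smul (isBigO_comp_of_isBigO_one
      (isBigO_const_const _ one_ne_zero _) hdecay)).congr_right fun n => ?_
    exact mul_inv_cancel₀ n.cast_add_one_ne_zero
  refine ((isBigO_const_const (pencilResolvent D A N) one_ne_zero _).add hdiff).congr' ?_ .rfl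
  filter_upwards [hinv] with n hn
  rw [← neg_sub (n : ℝ), neg_smul, ← sub_eq_add_neg, ← pencilResolvent_sub hN hn, sub_sub_cancel]

lemma isMarcinkiewicz_pencilResolvent (hinv : ∀ᶠ n : ℕ in atTop, ((n : ℝ) • D - A).IsInvertible)
    (hdecay : (fun n => D ∘L pencilResolvent D A n) =O[atTop] fun n => ((n : ℝ) + 1)⁻¹) :
    IsMarcinkiewicz (pencilResolvent D A) := by
  have hone := isBigO_one_pencilResolvent hinv hdecay
  have hshift (k : ℕ) : Tendsto (· + k) atTop atTop := tendsto_add_atTop_nat k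
  have hdecay₂ : (fun n => D ∘L pencilResolvent D A (n + 2)) =O[atTop]
      fun n => ((n : ℝ) + 1)⁻¹ := by
    refine (hdecay.comp_tendsto (hshift 2)).trans (.of_norm_le fun n => ?_)
    rw [comp_apply, norm_of_nonneg (by positivity)]
    gcongr
    lia
  refine ⟨hone, ?_, ?_⟩
  · refine (isBigO_comp_of_isBigO_one (hone.comp_tendsto (hshift 1)) hdecay).neg_left.congr' ?_ .rfl
    filter_upwards [hinv, (hshift 1).eventually hinv] with n h₀ h₁
    exact (fwdDiff_pencilResolvent h₀ h₁).symm
  · have hprod := isBoundedBilinearMap_comp.isBigO_comp.trans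
      (hdecay₂.norm_left.mul hdecay.norm_left)
    refine ((isBigO_comp_of_isBigO_one (hone.comp_tendsto (hshift 1)) hprod).const_smul_left
      (2 : ℝ)).congr' ?_ (.of_forall fun n => by simp only [← sq, inv_pow])
    filter_upwards [hinv, (hshift 1).eventually hinv, (hshift 2).eventually hinv] with n h₀ h₁ h₂
    exact (fwdDiff_fwdDiff_pencilResolvent h₀ h₁ h₂).symm

end Resolvent

section PeriodicProblem

variable {ι A : U →L[ℝ] V}

/-- The resolvent `(in - A_c)⁻¹` of the complexified operator at the natural frequency `n`, as a
bounded real-linear map; `0` where `in - A_c` is not invertible. -/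
def resolventC (ι A : U →L[ℝ] V) : ℕ → V × V →L[ℝ] U × U :=
  pencilResolvent (mulI V ∘L ι.prodMap ι) (A.prodMap A)

lemma smul_mulI_sub_prodMap_apply (ι A : U →L[ℝ] V) (n : ℕ) (ψ : U × U) :
    ((n : ℝ) • (mulI V ∘L ι.prodMap ι) - A.prodMap A) ψ = cMinusA ι A (Complex.I * n) ψ := by
  ext <;> simp [cMinusA, csmul, iotaC, AcC, mulI]

lemma resolventC_mulI (ι A : U →L[ℝ] V) (n : ℕ) (χ : V × V) :
    resolventC ι A n (mulI V χ) = mulI U (resolventC ι A n χ) :=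
  pencilResolvent_comm (fun ψ => by simp [mulI]) (fun ψ => by simp [mulI]) n χ

lemma H4hyp.bijective (hH4 : H4hyp ι A) {n : ℕ} (hn : n ≠ 1) :
    Bijective (cMinusA ι A (Complex.I * n)) :=
  mod_cast hH4 n (mod_cast hn) (by lia)

lemma cMinusA_zero (c : ℂ) : cMinusA ι A c 0 = 0 := by simp [cMinusA, csmul, iotaC, AcC]

variable {β : ℝ} {y : ℝ → V} {w : ℝ → U}

lemma MemX.hasDerivAt (hw : MemX β ι w) (t : ℝ) :
    HasDerivAt (fun s => ι (w s)) (Xder ι w t) t :=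
  (hw.2.1 t).hasDerivAt

lemma MemX.memHolder_T1op (hw : MemX β ι w) : MemHolder β (T1op ι A w) :=
  hw.2.2.sub (hw.1.map A)

lemma memX_of_hasDerivAt (hw : MemHolder β w) (hy : MemHolder β y)
    (h : ∀ t, HasDerivAt (fun s => ι (w s)) (y t + A (w t)) t) : MemX β ι w := by
  have hder : Xder ι w = fun t => y t + A (w t) := funext fun t => (h t).deriv
  exact ⟨hw, fun t => (h t).differentiableAt, hder ▸ hy.add (hw.map A)⟩

lemma T1op_eq_of_hasDerivAt (h : ∀ t, HasDerivAt (fun s => ι (w s)) (y t + A (w t)) t) :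
    T1op ι A w = y :=
  funext fun t => sub_eq_of_eq_add (h t).deriv

variable [CompleteSpace V]

/-- The space `X_∞`: functions of class `X` without Fourier coefficients of orders `-1, 0, 1`, the
coefficients being taken in `V_c`. -/
def Xinf (β : ℝ) (ι : U →L[ℝ] V) : Set (ℝ → U) :=
  {w | MemX β ι w ∧ ∀ n : ℤ, n = -1 ∨ n = 0 ∨ n = 1 → fourierC (fun t => ι (w t)) n = 0}

variable (V) in
/-- The space `Y_∞`: `β`-Hölder periodic functions without Fourier coefficients of orders
`-1, 0, 1`. -/
def Yinf (β : ℝ) : Set (ℝ → V) :=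
  {y | MemHolder β y ∧ ∀ n : ℤ, n = -1 ∨ n = 0 ∨ n = 1 → fourierC y n = 0}

variable [CompleteSpace U]

lemma H4hyp.isInvertible (hH4 : H4hyp ι A) {n : ℕ} (hn : n ≠ 1) :
    ((n : ℝ) • (mulI V ∘L ι.prodMap ι) - A.prodMap A).IsInvertible := by
  have hbij := hH4.bijective hn
  rw [← funext (smul_mulI_sub_prodMap_apply ι A n)] at hbij
  exact ⟨.ofBijective _ (LinearMap.ker_eq_bot.2 hbij.1) (LinearMap.range_eq_top.2 hbij.2),
    ContinuousLinearEquiv.coe_ofBijective ..⟩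

lemma cMinusA_resolventC (hH4 : H4hyp ι A) {n : ℕ} (hn : n ≠ 1) (χ : V × V) :
    cMinusA ι A (Complex.I * n) (resolventC ι A n χ) = χ := by
  rw [← smul_mulI_sub_prodMap_apply]
  exact (hH4.isInvertible hn).self_apply_inverse χ

lemma isMarcinkiewicz_resolventC (hH4 : H4hyp ι A) (hH5 : H5hyp ι A) :
    IsMarcinkiewicz (resolventC ι A) := by
  obtain ⟨M, hM, hbound⟩ := hH5
  refine isMarcinkiewicz_pencilResolvent
    ((eventually_ne_atTop 1).mono fun n hn => hH4.isInvertible hn)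
    (.of_bound (2 * M) (eventually_atTop.2 ⟨2, fun n hn => ?_⟩))
  have : (2 : ℝ) ≤ n := mod_cast hn
  refine ContinuousLinearMap.opNorm_le_bound _ (by positivity) fun χ => ?_
  have hχ := hbound n hn (resolventC ι A n χ)
  rw [cMinusA_resolventC hH4 (by lia)] at hχ
  calc _ = ‖iotaC ι (resolventC ι A n χ)‖ := norm_mulI _
    _ ≤ 2 * M * ‖((n : ℝ) + 1)⁻¹‖ * ‖χ‖ := by
      rw [norm_of_nonneg (by positivity)]
      field_simp
      nlinarith [norm_nonneg (iotaC ι (resolventC ι A n χ))]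

lemma fourierC_T1op (hβ : 0 < β) (hw : MemX β ι w) (n : ℤ) :
    fourierC (T1op ι A w) n = cMinusA ι A (Complex.I * n) (fourierC w n) := by
  have hwc := hw.1.continuous hβ
  have hder := hw.2.2.continuous hβ
  have hAw : Continuous fun t => A (w t) := A.continuous.comp hwc
  unfold T1op
  rw [fourierC_sub hder hAw, fourierC_deriv hw.hasDerivAt hder (hw.1.1.comp ι), fourierC_map hwc,
    fourierC_map hwc]
  rfl

lemma hasDerivAt_of_cMinusA_fourierC (hβ : 0 < β) (hw : MemHolder β w) (hy : MemHolder β y)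
    (h : ∀ n : ℕ, cMinusA ι A (Complex.I * n) (fourierC w n) = fourierC y n) (t : ℝ) :
    HasDerivAt (fun s => ι (w s)) (y t + A (w t)) t := by
  have hwc := hw.continuous hβ
  have hιw := hw.map ι
  have hAw := hw.map A
  have hg := hy.add hAw
  refine hasDerivAt_of_fourierC (hιw.continuous hβ) hιw.1 (hg.continuous hβ) hg.1 (fun n => ?_) t
  rw [fourierC_add (hy.continuous hβ) (hAw.continuous hβ), fourierC_map hwc, fourierC_map hwc,
    ← h n]
  exact sub_add_cancel _ _

lemma fourierC_map_eq_zero_iff (hι : Injective ι) (hw : Continuous w) (n : ℤ) :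
    fourierC (fun t => ι (w t)) n = 0 ↔ fourierC w n = 0 := by
  rw [fourierC_map hw]
  simp [AcC, Prod.ext_iff, map_eq_zero_iff ι hι]

lemma mem_Xinf_iff (hι : Injective ι) (hβ : 0 < β) :
    w ∈ Xinf β ι ↔ MemX β ι w ∧ ∀ m : ℕ, m < 2 → fourierC w m = 0 :=
  and_congr_right fun hw => forall_fourierC_eq_zero_iff_lt_two.trans <|
    forall₂_congr fun m _ => fourierC_map_eq_zero_iff hι (hw.1.continuous hβ) m

lemma mem_Yinf_iff : y ∈ Yinf V β ↔ MemHolder β y ∧ ∀ m : ℕ, m < 2 → fourierC y m = 0 :=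
  and_congr_right fun _ => forall_fourierC_eq_zero_iff_lt_two

lemma mapsTo_T1op (hι : Injective ι) (hβ : 0 < β) :
    MapsTo (T1op ι A) (Xinf β ι) (Yinf V β) := fun w hw => by
  obtain ⟨hwX, hlow⟩ := (mem_Xinf_iff hι hβ).1 hw
  refine mem_Yinf_iff.2 ⟨hwX.memHolder_T1op, fun m hm => ?_⟩
  rw [fourierC_T1op hβ hwX, hlow m hm, cMinusA_zero]

lemma injOn_T1op (hι : Injective ι) (hβ : 0 < β) (hH4 : H4hyp ι A) :
    InjOn (T1op ι A) (Xinf β ι) := fun w₁ hw₁ w₂ hw₂ h => by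
  obtain ⟨hX₁, hlow₁⟩ := (mem_Xinf_iff hι hβ).1 hw₁
  obtain ⟨hX₂, hlow₂⟩ := (mem_Xinf_iff hι hβ).1 hw₂
  refine eq_of_fourierC (hX₁.1.continuous hβ) (hX₂.1.continuous hβ) hX₁.1.1 hX₂.1.1 fun n => ?_
  rcases lt_or_ge n 2 with hn | hn
  · rw [hlow₁ n hn, hlow₂ n hn]
  · refine (hH4.bijective (n := n) (by lia)).1 ?_
    simpa only [fourierC_T1op hβ hX₁, fourierC_T1op hβ hX₂, Int.cast_natCast] using
      congrArg (fourierC · n) h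

lemma surjOn_T1op (hι : Injective ι) (hβ : β ∈ Ioo (0 : ℝ) 1) (hH4 : H4hyp ι A)
    (hH5 : H5hyp ι A) : SurjOn (T1op ι A) (Xinf β ι) (Yinf V β) := fun y hy => by
  obtain ⟨hyH, hlow⟩ := mem_Yinf_iff.1 hy
  obtain ⟨w, hw, hcoeff⟩ := (isMarcinkiewicz_resolventC hH4 hH5).exists_memHolder_fourierC_eq
    (resolventC_mulI ι A) hβ hyH
  have hsolve (n : ℕ) : cMinusA ι A (Complex.I * n) (fourierC w n) = fourierC y n := by
    rw [hcoeff n]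
    split_ifs with hn
    · exact cMinusA_resolventC hH4 (by lia) _
    · rw [cMinusA_zero, hlow n (not_le.1 hn)]
  have hder := hasDerivAt_of_cMinusA_fourierC hβ.1 hw hyH hsolve
  refine ⟨w, (mem_Xinf_iff hι hβ.1).2 ⟨memX_of_hasDerivAt hw hyH hder, fun m hm => ?_⟩,
    T1op_eq_of_hasDerivAt hder⟩
  rw [hcoeff m, if_neg (not_le.2 hm)]

end PeriodicProblem

theorem T_bijective_Xinf_Yinf_general
    {V : Type*} [NormedAddCommGroup V] [NormedSpace ℝ V] [CompleteSpace V]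
    {U : Type*} [NormedAddCommGroup U] [NormedSpace ℝ U] [CompleteSpace U]
    {ι A : U →L[ℝ] V} (hι : Injective ι) {β : ℝ} (hβ : β ∈ Ioo (0 : ℝ) 1)
    (hH4 : H4hyp ι A) (hH5 : H5hyp ι A) :
    BijOn (T1op ι A) (Xinf β ι) (Yinf V β) :=
  ⟨mapsTo_T1op hι hβ.1, injOn_T1op hι hβ.1 hH4, surjOn_T1op hι hβ hH4 hH5⟩

/-- **Lemma 4.2.** Assume (H2), (H4) and (H5).  Then `T : X_∞ → Y_∞`, `Tu = u_t - Au`,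
is bijective, where `X_∞` and `Y_∞` are the subspaces of `X` resp. `Y` of functions whose
Fourier coefficients of orders `-1, 0, 1` vanish. -/
theorem T_bijective_Xinf_Yinf
    {V : Type*} [NormedAddCommGroup V] [NormedSpace ℝ V] [CompleteSpace V]
    {U : Type*} [NormedAddCommGroup U] [NormedSpace ℝ U] [CompleteSpace U]
    (ι A : U →L[ℝ] V) (hι : Function.Injective ι)
    (hUnorm : ∀ u : U, ‖u‖ = ‖A u‖) (hAbij : Function.Bijective A)
    (β : ℝ) (hβ : β ∈ Set.Ioo (0 : ℝ) 1)
    (hH2 : H2hyp ι A) (hH4 : H4hyp ι A) (hH5 : H5hyp ι A) :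
    Set.BijOn (fun w : ℝ → U => T1op ι A w)
      {w : ℝ → U | MemX β ι w ∧
        ∀ n : ℤ, n = -1 ∨ n = 0 ∨ n = 1 → fourierC (fun t => ι (w t)) n = 0}
      {y : ℝ → V | MemHolder β y ∧
        ∀ n : ℤ, n = -1 ∨ n = 0 ∨ n = 1 → fourierC y n = 0} :=
  T_bijective_Xinf_Yinf_general hι hβ hH4 hH5

end HopfStmt
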